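/- arXiv:hep-th/9601135 — 13 statements merged into one kernel-verified Lean document; each statement's English description precedes it below -/
import Mathlib

section
/- Let ν, α, β₁, β₂ ∈ ℂ with sinh(ν(πi−β₁+β₂)) ≠ 0. Then b̄(β₁−β₂)·sinh(ν(α−β₁+πi/2)) + c̄(β₁−β₂)·sinh(ν(β₂−α+πi/2)) = sinh(ν(β₁−α+πi/2)). -/
noncomputable def bbar (ν β : ℂ) : ℂ :=
  Complex.sinh (ν * β) / Complex.sinh (ν * (Real.pi * Complex.I - β))

noncomputable def cbar (ν β : ℂ) : ℂ :=
  Complex.sinh (ν * (Real.pi * Complex.I)) / Complex.sinh (ν * (Real.pi * Complex.I - β))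

theorem two_sinh_mul_sinh_aux (A B : ℂ) :
    Complex.sinh A * Complex.sinh B = (Complex.cosh (A + B) - Complex.cosh (A - B)) / 2 := by
  rw [Complex.cosh_add, Complex.cosh_sub]
  ring

/-- The exchange identity
`b̄(β₁-β₂)·sinh(ν(α-β₁+πi/2)) + c̄(β₁-β₂)·sinh(ν(β₂-α+πi/2)) = sinh(ν(β₁-α+πi/2))`. -/
theorem qKZ_exchange_identity (ν α β₁ β₂ : ℂ)
    (h : Complex.sinh (ν * (Real.pi * Complex.I - β₁ + β₂)) ≠ 0) :
    bbar ν (β₁ - β₂) * Complex.sinh (ν * (α - β₁ + Real.pi * Complex.I / 2))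
      + cbar ν (β₁ - β₂) * Complex.sinh (ν * (β₂ - α + Real.pi * Complex.I / 2))
      = Complex.sinh (ν * (β₁ - α + Real.pi * Complex.I / 2)) := by
  have e : (Real.pi * Complex.I - (β₁ - β₂) : ℂ) = Real.pi * Complex.I - β₁ + β₂ := by ring
  unfold bbar cbar
  rw [e, div_mul_eq_mul_div, div_mul_eq_mul_div, ← add_div, div_eq_iff h,
    two_sinh_mul_sinh_aux, two_sinh_mul_sinh_aux, two_sinh_mul_sinh_aux]
  have e1 : Complex.cosh (ν * (Real.pi * Complex.I) - ν * (β₂ - α + Real.pi * Complex.I / 2))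
      = Complex.cosh (ν * (β₁ - β₂) + ν * (α - β₁ + Real.pi * Complex.I / 2)) := by
    congr 1; ring
  have e2 : Complex.cosh (ν * (Real.pi * Complex.I) + ν * (β₂ - α + Real.pi * Complex.I / 2))
      = Complex.cosh (ν * (β₁ - α + Real.pi * Complex.I / 2)
        + ν * (Real.pi * Complex.I - β₁ + β₂)) := by
    congr 1; ring
  have e3 : Complex.cosh (ν * (β₁ - α + Real.pi * Complex.I / 2)
        - ν * (Real.pi * Complex.I - β₁ + β₂))
      = Complex.cosh (ν * (β₁ - β₂) - ν * (α - β₁ + Real.pi * Complex.I / 2)) := by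
    congr 1; ring
  rw [e1, e2, e3]
  ring
end

section
/- Let ν, α, α′, β, β′ ∈ ℂ with sinh(ν(α−α′−πi)) ≠ 0 and sinh(ν(α′−α−πi)) ≠ 0. Define B(α,α′;β,β′) = sinh(ν(α′−β+πi/2))·sinh(ν(β′−α+πi/2))/sinh(ν(α−α′−πi)) − sinh(ν(α−β+πi/2))·sinh(ν(β′−α′+πi/2))/sinh(ν(α′−α−πi)). Then B(α,α′;β,β′) = B(α,α′;β′,β); that is, the antisymmetrization in α, α′ of the kernel sinh(ν(α′−β+πi/2))sinh(ν(β′−α+πi/2))/sinh(ν(α−α′−πi)) is symmetric under the exchange of β and β′. -/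
/-- The antisymmetrization in `α, α'` of the kernel
`sinh(ν(α'-β+πi/2))·sinh(ν(β'-α+πi/2)) / sinh(ν(α-α'-πi))`. -/
noncomputable def Bker (ν α α' β β' : ℂ) : ℂ :=
  Complex.sinh (ν * (α' - β + Real.pi * Complex.I / 2)) *
      Complex.sinh (ν * (β' - α + Real.pi * Complex.I / 2)) /
      Complex.sinh (ν * (α - α' - Real.pi * Complex.I))
    - Complex.sinh (ν * (α - β + Real.pi * Complex.I / 2)) *
      Complex.sinh (ν * (β' - α' + Real.pi * Complex.I / 2)) /
      Complex.sinh (ν * (α' - α - Real.pi * Complex.I))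

theorem sinh_key (A B d : ℂ) :
    Complex.sinh A * Complex.sinh B - Complex.sinh (A - d) * Complex.sinh (B - d)
      = Complex.sinh (A + B - d) * Complex.sinh d := by
  have h := Complex.cosh_sq d
  simp only [Complex.sinh_sub, Complex.sinh_add, Complex.cosh_add]
  linear_combination (-Complex.sinh A * Complex.sinh B) * h

theorem half_key (A B A' B' S d : ℂ) (hA : A' = A - d) (hB : B' = B - d)
    (hS : S = -(A + B - d)) (h : Complex.sinh S ≠ 0) :
    Complex.sinh A * Complex.sinh B / Complex.sinh S
      - Complex.sinh A' * Complex.sinh B' / Complex.sinh S = - Complex.sinh d := by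
  rw [← sub_div, hA, hB, sinh_key, div_eq_iff h, hS, Complex.sinh_neg]
  ring

/-- The antisymmetrized kernel is symmetric under exchange of `β` and `β'`. -/
theorem Bker_symm (ν α α' β β' : ℂ)
    (h₁ : Complex.sinh (ν * (α - α' - Real.pi * Complex.I)) ≠ 0)
    (h₂ : Complex.sinh (ν * (α' - α - Real.pi * Complex.I)) ≠ 0) :
    Bker ν α α' β β' = Bker ν α α' β' β := by
  have e₁ := half_key (ν * (α' - β + Real.pi * Complex.I / 2))
    (ν * (β' - α + Real.pi * Complex.I / 2)) (ν * (α' - β' + Real.pi * Complex.I / 2))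
    (ν * (β - α + Real.pi * Complex.I / 2)) _ (ν * (β' - β)) (by ring) (by ring) (by ring) h₁
  have e₂ := half_key (ν * (α - β + Real.pi * Complex.I / 2))
    (ν * (β' - α' + Real.pi * Complex.I / 2)) (ν * (α - β' + Real.pi * Complex.I / 2))
    (ν * (β - α' + Real.pi * Complex.I / 2)) _ (ν * (β' - β)) (by ring) (by ring) (by ring) h₂
  unfold Bker
  linear_combination e₁ - e₂
end

section
/- Let 0 < ν < 1 and λ > 0 be real. For β ∈ ℝ define κ(β) = exp(−i·∫₀^∞ (dt/t)·sin(2βνt/π)·sinh((1−ν)t)/(sinh t · cosh νt)) and ρ̂(β) = exp(∫₀^∞ (dt/t)·sin²((β−iλ/2)νt/π)·sinh((1−ν)t)/(cosh νt · sinh t · sinh(λνt/π))). Then both integrals converge absolutely for every β ∈ ℝ, and ρ̂(β)/ρ̂(−β) = κ(β) for all β ∈ ℝ. -/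
open MeasureTheory

/-- The integrand in the definition of `κ(β)`. -/
noncomputable def kappaInt (ν β t : ℝ) : ℝ :=
  (1 / t) * Real.sin (2 * β * ν * t / Real.pi) * Real.sinh ((1 - ν) * t) /
    (Real.sinh t * Real.cosh (ν * t))

/-- `κ(β) = exp(-i ∫₀^∞ dt/t · sin(2βνt/π) sinh((1-ν)t)/(sinh t cosh νt))`. -/
noncomputable def kappaFn (ν β : ℝ) : ℂ :=
  Complex.exp (-Complex.I * ((∫ t in Set.Ioi (0 : ℝ), kappaInt ν β t) : ℝ))

/-- The integrand in the definition of `ρ̂(β)`. -/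
noncomputable def rhoInt (ν lam β t : ℝ) : ℂ :=
  (1 / (t : ℂ)) * (Complex.sin (((β : ℂ) - Complex.I * lam / 2) * ν * t / Real.pi)) ^ 2 *
      Complex.sinh (((1 - ν) * t : ℝ) : ℂ) /
    (Complex.cosh ((ν * t : ℝ) : ℂ) * Complex.sinh ((t : ℝ) : ℂ) *
      Complex.sinh ((lam * ν * t / Real.pi : ℝ) : ℂ))

/-- `ρ̂(β) = exp(∫₀^∞ dt/t · sin²((β-iλ/2)νt/π) sinh((1-ν)t)/(cosh νt sinh t sinh(λνt/π)))`. -/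
noncomputable def rhoHat (ν lam β : ℝ) : ℂ :=
  Complex.exp (∫ t in Set.Ioi (0 : ℝ), rhoInt ν lam β t)

lemma aux_ratio (ν t : ℝ) (hν0 : 0 < ν) (hν1 : ν < 1) (ht : 0 < t) :
    0 ≤ Real.sinh ((1 - ν) * t) / (Real.sinh t * Real.cosh (ν * t)) ∧
    Real.sinh ((1 - ν) * t) / (Real.sinh t * Real.cosh (ν * t)) ≤ Real.exp (-ν * t) := by
  have h1 : 0 < Real.sinh t := Real.sinh_pos_iff.2 ht
  have h2 : 0 < Real.cosh (ν * t) := Real.cosh_pos _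
  have h3 : 0 < (1 - ν) * t := mul_pos (by linarith) ht
  have h4 : 0 < Real.sinh ((1 - ν) * t) := Real.sinh_pos_iff.2 h3
  refine ⟨by positivity, ?_⟩
  rw [div_le_iff₀ (by positivity)]
  have h5 : Real.sinh ((1 - ν) * t) ≤ Real.exp (-ν * t) * Real.sinh t := by
    rw [Real.sinh_eq, Real.sinh_eq]
    have e1 : Real.exp ((1 - ν) * t) = Real.exp (-ν * t) * Real.exp t := by
      rw [← Real.exp_add]; ring_nf
    have e2 : Real.exp (-ν * t) * Real.exp (-t) ≤ Real.exp (-((1 - ν) * t)) := by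
      rw [← Real.exp_add]; apply Real.exp_le_exp.2; nlinarith [mul_pos hν0 ht]
    rw [e1]; linarith
  have h6 : 1 ≤ Real.cosh (ν * t) := Real.one_le_cosh _
  have h7 : 0 < Real.exp (-ν * t) * Real.sinh t := by positivity
  nlinarith

lemma aux_sinh (b : ℝ) (hb : 0 < b) : Real.sinh b ≤ 2 * b * Real.cosh b := by
  rw [Real.sinh_eq, Real.cosh_eq]
  have h1 := Real.add_one_le_exp (-(2 * b))
  have h2 : Real.exp (-b) = Real.exp b * Real.exp (-(2 * b)) := by
    rw [← Real.exp_add]; ring_nf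
  have h3 := Real.exp_pos b
  have h4 := mul_pos hb (Real.exp_pos (-b))
  nlinarith

lemma aux_sin (a b : ℝ) :
    ‖Complex.sin ((a : ℂ) - Complex.I * b)‖ ^ 2 = Real.sin a ^ 2 + Real.sinh b ^ 2 := by
  have : Complex.sin ((a : ℂ) - Complex.I * b) =
      ((Real.sin a * Real.cosh b : ℝ) : ℂ) + ((-(Real.cos a * Real.sinh b) : ℝ) : ℂ) * Complex.I := by
    have := Complex.sin_add_mul_I (a : ℂ) (-b : ℂ)
    rw [show (a : ℂ) - Complex.I * b = a + -b * Complex.I by ring, this]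
    push_cast
    rw [Complex.cosh_neg, Complex.sinh_neg]; ring
  rw [this, Complex.sq_norm, Complex.normSq_add_mul_I]
  have h1 := Real.sin_sq_add_cos_sq a
  have h2 := Real.cosh_sq b
  rw [neg_sq, mul_pow, mul_pow, h2]
  linear_combination Real.sinh b ^ 2 * h1

lemma aux_kappa (ν β : ℝ) (hν0 : 0 < ν) (hν1 : ν < 1) :
    IntegrableOn (kappaInt ν β) (Set.Ioi 0) := by
  have hm : Measurable (kappaInt ν β) := by
    unfold kappaInt
    fun_prop
  have hg : IntegrableOn (fun t : ℝ => |2 * β * ν / Real.pi| * Real.exp (-ν * t)) (Set.Ioi 0) :=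
    (integrableOn_exp_mul_Ioi (by linarith) 0).const_mul _
  refine Integrable.mono' hg hm.aestronglyMeasurable ?_
  filter_upwards [ae_restrict_mem measurableSet_Ioi] with t ht
  have ht : 0 < t := ht
  obtain ⟨r0, r1⟩ := aux_ratio ν t hν0 hν1 ht
  have : kappaInt ν β t = (1 / t * Real.sin (2 * β * ν * t / Real.pi)) *
      (Real.sinh ((1 - ν) * t) / (Real.sinh t * Real.cosh (ν * t))) := by
    unfold kappaInt; ring
  rw [this, norm_mul, Real.norm_of_nonneg r0]
  refine mul_le_mul ?_ r1 r0 (abs_nonneg _)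
  rw [norm_mul, Real.norm_of_nonneg (by positivity), Real.norm_eq_abs]
  have h : |Real.sin (2 * β * ν * t / Real.pi)| ≤ |2 * β * ν * t / Real.pi| := Real.abs_sin_le_abs
  rw [show 2 * β * ν * t / Real.pi = (2 * β * ν / Real.pi) * t by ring, abs_mul _ t,
    abs_of_pos ht] at h
  rw [one_div, inv_mul_le_iff₀ ht]
  rw [show 2 * β * ν * t / Real.pi = (2 * β * ν / Real.pi) * t by ring]
  linarith

lemma aux_rho (ν lam β : ℝ) (hν0 : 0 < ν) (hν1 : ν < 1) (hlam : 0 < lam) :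
    IntegrableOn (rhoInt ν lam β) (Set.Ioi 0) := by
  have hm : Measurable (rhoInt ν lam β) := by
    unfold rhoInt
    fun_prop
  have hpi := Real.pi_pos
  set c := ν / Real.pi with hc
  have hc0 : 0 < c := by positivity
  have hg : IntegrableOn (fun t : ℝ => (β ^ 2 * c / lam + lam * c / 2) * Real.exp (-ν * t))
      (Set.Ioi 0) := (integrableOn_exp_mul_Ioi (by linarith) 0).const_mul _
  refine Integrable.mono' hg hm.aestronglyMeasurable ?_
  filter_upwards [ae_restrict_mem measurableSet_Ioi] with t ht
  have ht : 0 < t := ht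
  obtain ⟨r0, r1⟩ := aux_ratio ν t hν0 hν1 ht
  have hL : lam * ν * t / Real.pi = 2 * (lam * c * t / 2) := by rw [hc]; ring
  have hb : 0 < lam * c * t / 2 := by positivity
  have e : rhoInt ν lam β t = ((1 / t : ℝ) : ℂ) *
      (Complex.sin (((β * c * t : ℝ) : ℂ) - Complex.I * ((lam * c * t / 2 : ℝ) : ℂ))) ^ 2 *
      ((1 / Real.sinh (2 * (lam * c * t / 2)) : ℝ) : ℂ) *
      ((Real.sinh ((1 - ν) * t) / (Real.sinh t * Real.cosh (ν * t)) : ℝ) : ℂ) := by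
    unfold rhoInt
    rw [hL, show ((β : ℂ) - Complex.I * lam / 2) * ν * t / Real.pi =
      ((β * c * t : ℝ) : ℂ) - Complex.I * ((lam * c * t / 2 : ℝ) : ℂ) by
        rw [hc]; push_cast; ring]
    push_cast
    ring
  have hs : 0 < Real.sinh (lam * c * t / 2) := Real.sinh_pos_iff.2 hb
  have hs2 : 0 < Real.sinh (2 * (lam * c * t / 2)) := Real.sinh_pos_iff.2 (by positivity)
  rw [e, norm_mul, Complex.norm_of_nonneg r0]
  refine mul_le_mul ?_ r1 r0 (by positivity)
  rw [norm_mul, norm_mul, norm_pow, aux_sin, Complex.norm_of_nonneg (by positivity),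
    Complex.norm_of_nonneg (by positivity)]
  have h1 : Real.sin (β * c * t) ^ 2 ≤ (β * c * t) ^ 2 := sq_le_sq.2 Real.abs_sin_le_abs
  have h2 : 2 * (lam * c * t / 2) ≤ Real.sinh (2 * (lam * c * t / 2)) :=
    Real.self_le_sinh_iff.2 (by positivity)
  have h3 := aux_sinh _ hb
  have h4 : Real.sinh (lam * c * t / 2) ^ 2 ≤
      lam * c * t / 2 * Real.sinh (2 * (lam * c * t / 2)) := by
    rw [Real.sinh_two_mul]; nlinarith
  rw [one_div, one_div, mul_assoc, inv_mul_le_iff₀ ht, mul_inv_le_iff₀ hs2]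
  have h5 : (β * c * t) ^ 2 = t * (β ^ 2 * c / lam) * (2 * (lam * c * t / 2)) := by
    field_simp
  have h6 : t * (β ^ 2 * c / lam) * (2 * (lam * c * t / 2)) ≤
      t * (β ^ 2 * c / lam) * Real.sinh (2 * (lam * c * t / 2)) := by gcongr
  linarith

lemma aux_id (ν lam β t : ℝ) (hν0 : 0 < ν) (hlam : 0 < lam) (ht : 0 < t) :
    rhoInt ν lam β t - rhoInt ν lam (-β) t = -Complex.I * ((kappaInt ν β t : ℝ) : ℂ) := by
  have hpi := Real.pi_pos
  have hs : Complex.sinh ((lam * ν * t / Real.pi : ℝ) : ℂ) ≠ 0 := by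
    rw [← Complex.ofReal_sinh]
    exact_mod_cast (Real.sinh_pos_iff.2 (by positivity)).ne'
  have key : ∀ a b : ℂ, Complex.sin (a - b * Complex.I) ^ 2 - Complex.sin (-a - b * Complex.I) ^ 2
      = -Complex.I * Complex.sin (2 * a) * Complex.sinh (2 * b) := by
    intro a b
    rw [sub_eq_add_neg a, sub_eq_add_neg (-a), ← neg_mul, Complex.sin_add_mul_I, Complex.sin_add_mul_I,
      Complex.sin_two_mul, Complex.sinh_two_mul]
    simp only [Complex.sin_neg, Complex.cos_neg, Complex.sinh_neg, Complex.cosh_neg]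
    ring
  have k := key (β * ν * t / Real.pi) (lam * ν * t / Real.pi / 2)
  unfold rhoInt kappaInt
  rw [show ((β : ℂ) - Complex.I * lam / 2) * ν * t / Real.pi =
      β * ν * t / Real.pi - lam * ν * t / Real.pi / 2 * Complex.I by ring,
    show (((-β : ℝ) : ℂ) - Complex.I * lam / 2) * ν * t / Real.pi =
      -(β * ν * t / Real.pi) - lam * ν * t / Real.pi / 2 * Complex.I by push_cast; ring]
  rw [show (2 : ℂ) * (lam * ν * t / Real.pi / 2) = ((lam * ν * t / Real.pi : ℝ) : ℂ) by
    push_cast; ring, show (2 : ℂ) * (β * ν * t / Real.pi) = ((2 * β * ν * t / Real.pi : ℝ) : ℂ) by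
    push_cast; ring] at k
  push_cast at k hs ⊢
  generalize Complex.sinh ((lam : ℂ) * ν * t / Real.pi) = S at *
  rw [← sub_div, ← sub_mul, ← mul_sub, k]
  rw [show ∀ x y z w u : ℂ, x * (-Complex.I * y * S) * z / (w * u * S) =
    (-Complex.I * (x * y * z / (u * w))) * (S / S) by intros; ring]
  rw [div_self hs, mul_one]

/-- Both defining integrals converge absolutely, and `ρ̂(β)/ρ̂(-β) = κ(β)`. -/
theorem rhoHat_div_rhoHat_neg (ν lam : ℝ) (hν0 : 0 < ν) (hν1 : ν < 1) (hlam : 0 < lam) :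
    (∀ β : ℝ, IntegrableOn (kappaInt ν β) (Set.Ioi 0) ∧
      IntegrableOn (rhoInt ν lam β) (Set.Ioi 0)) ∧
    ∀ β : ℝ, rhoHat ν lam β / rhoHat ν lam (-β) = kappaFn ν β := by
  refine ⟨fun β => ⟨aux_kappa ν β hν0 hν1, aux_rho ν lam β hν0 hν1 hlam⟩, fun β => ?_⟩
  unfold rhoHat kappaFn
  rw [← Complex.exp_sub, ← integral_sub (aux_rho ν lam β hν0 hν1 hlam)
    (aux_rho ν lam (-β) hν0 hν1 hlam)]
  congr 1
  rw [← integral_complex_ofReal, ← integral_const_mul]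
  exact setIntegral_congr_fun measurableSet_Ioi fun t ht => aux_id ν lam β t hν0 hlam ht
end

section
/- Let n ≥ 1 and β₁, …, β_{2n} ∈ ℂ. Define F₊(α) = ∏_{j=1}^{2n} sinh(½(α−β_j+πi/2)) and F₋(α) = (−1)ⁿ·∏_{j=1}^{2n} sinh(½(α−β_j−πi/2)). Then there exist complex numbers c₁, c₂, …, c_n (depending only on the β_j) such that for all α ∈ ℂ: F₊(α) − F₋(α) = Σ_{l=1}^{n} c_l·e^{(2l−n−1)α}, and moreover c₁ = (−i)^{n+1}·2^{1−2n}·e^{Σ_{j=1}^{2n} β_j/2}·Σ_{j=1}^{2n} e^{−β_j}. In particular, F₊ − F₋ is a linear combination of the exponentials e^{(2l−n−1)α} with 1 ≤ l ≤ n, and its coefficient at e^{−(n−1)α} is (−i)^{n+1}2^{1−2n}e^{Σβ_j/2}Σ_j e^{−β_j}. -/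
open Finset

lemma aux_poly {ι : Type*} (s : Finset ι) (b : ι → ℂ) :
    (∏ j ∈ s, (1 + Polynomial.C (b j) * Polynomial.X)).coeff 0 = 1 ∧
    (∏ j ∈ s, (1 + Polynomial.C (b j) * Polynomial.X)).coeff 1 = ∑ j ∈ s, b j ∧
    (∏ j ∈ s, (1 + Polynomial.C (b j) * Polynomial.X)).natDegree ≤ s.card := by
  classical
  induction s using Finset.induction_on with
  | empty => simp [Polynomial.coeff_one]
  | insert a s ha ih =>
    obtain ⟨h0, h1, h2⟩ := ih
    rw [Finset.prod_insert ha, Finset.sum_insert ha, Finset.card_insert_of_notMem ha]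
    refine ⟨?_, ?_, ?_⟩
    · rw [Polynomial.mul_coeff_zero, h0]; simp
    · rw [add_mul, one_mul, Polynomial.coeff_add, h1, mul_assoc, Polynomial.coeff_C_mul,
        Polynomial.coeff_X_mul, h0]
      ring
    · refine Polynomial.natDegree_mul_le.trans ?_
      have : (1 + Polynomial.C (b a) * Polynomial.X).natDegree ≤ 1 := by
        compute_degree
      omega

lemma aux_odd (a : ℕ → ℂ) (y : ℂ) (n : ℕ) :
    (∑ k ∈ range (2 * n + 1), a k * (-y) ^ k) - ∑ k ∈ range (2 * n + 1), a k * y ^ k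
      = ∑ l ∈ Icc 1 n, a (2 * l - 1) * (-2 * y ^ (2 * l - 1)) := by
  induction n with
  | zero => simp
  | succ n ih =>
    rw [Finset.sum_Icc_succ_top (by omega), ← ih,
      show 2 * (n + 1) + 1 = 2 * n + 1 + 1 + 1 by ring,
      show 2 * (n + 1) - 1 = 2 * n + 1 by omega]
    simp only [Finset.sum_range_succ _ (2 * n + 1 + 1), Finset.sum_range_succ _ (2 * n + 1)]
    have h1 : (-y) ^ (2 * n + 1) = - y ^ (2 * n + 1) := Odd.neg_pow ⟨n, rfl⟩ y
    have h2 : (-y) ^ (2 * n + 1 + 1) = y ^ (2 * n + 1 + 1) := Even.neg_pow ⟨n + 1, by ring⟩ y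
    rw [h1, h2]
    ring

lemma aux_prod (n : ℕ) (β : Fin (2 * n) → ℂ) (α w s : ℂ) (hw : Complex.exp w ^ 2 = s) :
    ∏ j, Complex.sinh ((α - β j + 2 * w) / 2) =
      Complex.exp (-w) ^ (2 * n) * ((2 : ℂ) ^ (2 * n))⁻¹ * Complex.exp (∑ j, β j / 2) *
        Complex.exp (-(n * α)) * ∏ j, (1 + Complex.exp (-β j) * (-(s * Complex.exp α))) := by
  have h : ∀ j, Complex.sinh ((α - β j + 2 * w) / 2) =
      (-(Complex.exp (-w) * 2⁻¹ * Complex.exp (-(α / 2)))) * Complex.exp (β j / 2) *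
        (1 + Complex.exp (-β j) * (-(s * Complex.exp α))) := by
    intro j
    have e1 : Complex.exp (-w) * Complex.exp (-(α / 2)) * Complex.exp (β j / 2)
        = Complex.exp (-((α - β j + 2 * w) / 2)) := by
      rw [← Complex.exp_add, ← Complex.exp_add]; congr 1; ring
    have e2 : Complex.exp (-((α - β j + 2 * w) / 2)) * (Complex.exp (-β j) * (s * Complex.exp α))
        = Complex.exp ((α - β j + 2 * w) / 2) := by
      rw [← hw, sq]
      simp only [← Complex.exp_add]; congr 1; ring
    rw [Complex.sinh]
    linear_combination (-1/2) * e2 + (1/2) * (1 - Complex.exp (-β j) * (s * Complex.exp α)) * e1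
  rw [Finset.prod_congr rfl (fun j _ => h j), Finset.prod_mul_distrib, Finset.prod_mul_distrib,
    Complex.exp_sum, Finset.prod_const, Finset.card_univ, Fintype.card_fin,
    Even.neg_pow ⟨n, by ring⟩, mul_pow, mul_pow, inv_pow]
  have e3 : Complex.exp (-(α / 2)) ^ (2 * n) = Complex.exp (-(n * α)) := by
    rw [← Complex.exp_nat_mul]; congr 1; push_cast; ring
  rw [e3]; ring

/-- `F₊ - F₋` is a linear combination of `e^{(2l-n-1)α}`, `1 ≤ l ≤ n`, whose coefficient
at `e^{-(n-1)α}` (i.e. `l = 1`) is `(-i)^{n+1}·2^{1-2n}·e^{Σβⱼ/2}·Σⱼe^{-βⱼ}`. -/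
theorem Fplus_sub_Fminus_expansion (n : ℕ) (hn : 1 ≤ n) (β : Fin (2 * n) → ℂ) :
    ∃ c : ℕ → ℂ,
      (∀ α : ℂ,
        (∏ j, Complex.sinh ((α - β j + Real.pi * Complex.I / 2) / 2))
          - (-1 : ℂ) ^ n * ∏ j, Complex.sinh ((α - β j - Real.pi * Complex.I / 2) / 2)
        = ∑ l ∈ Finset.Icc 1 n, c l * Complex.exp ((2 * (l : ℂ) - (n : ℂ) - 1) * α)) ∧
      c 1 = (-Complex.I) ^ (n + 1) * (2 : ℂ) ^ (1 - 2 * (n : ℤ)) *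
        Complex.exp (∑ j, β j / 2) * ∑ j, Complex.exp (-β j) := by
  obtain ⟨-, h1, h2⟩ := aux_poly (Finset.univ : Finset (Fin (2 * n))) (fun j => Complex.exp (-β j))
  set P : Polynomial ℂ := ∏ j : Fin (2 * n),
    (1 + Polynomial.C (Complex.exp (-β j)) * Polynomial.X) with hP
  rw [Finset.card_univ, Fintype.card_fin] at h2
  have hev : ∀ y, ∏ j, (1 + Complex.exp (-β j) * y) =
      ∑ k ∈ range (2 * n + 1), P.coeff k * y ^ k := by
    intro y
    rw [← Polynomial.eval_eq_sum_range' (by omega), hP, Polynomial.eval_prod]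
    simp
  have hI : Complex.exp (Real.pi * Complex.I / 4) ^ 2 = Complex.I := by
    refine Eq.trans ?_ Complex.exp_pi_div_two_mul_I
    rw [← Complex.exp_nat_mul]; congr 1; push_cast; ring
  have hI' : Complex.exp (-(Real.pi * Complex.I / 4)) ^ 2 = -Complex.I := by
    rw [Complex.exp_neg, inv_pow, hI, Complex.inv_I]
  refine ⟨fun l => (-Complex.I) ^ n * ((2 : ℂ) ^ (2 * n))⁻¹ * Complex.exp (∑ j, β j / 2) *
    (P.coeff (2 * l - 1) * (-2 * Complex.I ^ (2 * l - 1))), ?_, ?_⟩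
  · intro α
    have hp := aux_prod n β α (Real.pi * Complex.I / 4) _ hI
    have hm := aux_prod n β α (-(Real.pi * Complex.I / 4)) _ hI'
    rw [pow_mul, hI', hev] at hp
    rw [neg_neg, pow_mul, hI, hev, neg_mul, neg_neg] at hm
    rw [show (2 : ℂ) * (Real.pi * Complex.I / 4) = Real.pi * Complex.I / 2 by ring] at hp
    rw [show (2 : ℂ) * -(Real.pi * Complex.I / 4) = -(Real.pi * Complex.I / 2) by ring] at hm
    simp only [← sub_eq_add_neg] at hm
    rw [hp, hm]
    have ho := aux_odd P.coeff (Complex.I * Complex.exp α) n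
    have hn1 : (-1 : ℂ) ^ n * Complex.I ^ n = (-Complex.I) ^ n := by
      rw [← mul_pow]; simp
    have hs : ∑ l ∈ Finset.Icc 1 n, ((-Complex.I) ^ n * ((2 : ℂ) ^ (2 * n))⁻¹ *
        Complex.exp (∑ j, β j / 2) * (P.coeff (2 * l - 1) * (-2 * Complex.I ^ (2 * l - 1)))) *
          Complex.exp ((2 * (l : ℂ) - (n : ℂ) - 1) * α)
        = (-Complex.I) ^ n * ((2 : ℂ) ^ (2 * n))⁻¹ *
        Complex.exp (∑ j, β j / 2) * Complex.exp (-(n * α)) * ∑ l ∈ Icc 1 n,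
          P.coeff (2 * l - 1) * (-2 * (Complex.I * Complex.exp α) ^ (2 * l - 1)) := by
      rw [Finset.mul_sum]
      refine Finset.sum_congr rfl fun l hl => ?_
      have hl1 : 1 ≤ l := (Finset.mem_Icc.mp hl).1
      have : Complex.exp ((2 * (l : ℂ) - (n : ℂ) - 1) * α)
          = Complex.exp (-(n * α)) * Complex.exp α ^ (2 * l - 1) := by
        rw [← Complex.exp_nat_mul, ← Complex.exp_add, Nat.cast_sub (by omega)]
        congr 1; push_cast; ring
      rw [this, mul_pow]; ring
    rw [hs, ← ho, ← hn1]
    ring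
  · have hz : (2 : ℂ) ^ (1 - 2 * (n : ℤ)) = 2 * ((2 : ℂ) ^ (2 * n))⁻¹ := by
      rw [zpow_sub₀ two_ne_zero, zpow_one, div_eq_mul_inv]
      norm_cast
    simp only [hz, mul_one, show 2 - 1 = 1 from rfl, h1, pow_one]
    ring
end

section
/- Let r ≤ i ≤ s be integers, n = s−r+1, and let B_r, …, B_s be complex numbers that are pairwise distinct and satisfy B_j + B_l ≠ 0 for all r ≤ j, l ≤ s. Define F_{ji} = 1/(∏_{l=r, l≠j}^{i}(B_j−B_l) · ∏_{l=i}^{s}(B_j+B_l)) for r ≤ j ≤ i, and G_{ji} = (−1)ⁿ/(∏_{l=r}^{i}(B_j+B_l) · ∏_{l=i, l≠j}^{s}(B_j−B_l)) for i ≤ j ≤ s. Then for every integer k with 1 ≤ k ≤ n: Σ_{j=r}^{i} (−B_j)^{k−1}·F_{ji} + Σ_{j=i}^{s} B_j^{k−1}·G_{ji} = 0. -/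
open Finset

/-- Total-residue-zero (partial fraction) identity:
`Σ_{j=r}^{i} (-B_j)^{k-1} F_{ji} + Σ_{j=i}^{s} B_j^{k-1} G_{ji} = 0` for `1 ≤ k ≤ n = s-r+1`. -/
theorem residue_sum_zero (r i s : ℤ) (hri : r ≤ i) (his : i ≤ s) (B : ℤ → ℂ)
    (hdist : Set.InjOn B (Set.Icc r s))
    (hsum : ∀ j ∈ Finset.Icc r s, ∀ l ∈ Finset.Icc r s, B j + B l ≠ 0)
    (k : ℕ) (hk : 1 ≤ k) (hk' : (k : ℤ) ≤ s - r + 1) :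
    ∑ j ∈ Finset.Icc r i, (-B j) ^ (k - 1) *
        (1 / ((∏ l ∈ (Finset.Icc r i).erase j, (B j - B l)) *
          ∏ l ∈ Finset.Icc i s, (B j + B l)))
      + ∑ j ∈ Finset.Icc i s, B j ^ (k - 1) *
        ((-1 : ℂ) ^ (s - r + 1) / ((∏ l ∈ Finset.Icc r i, (B j + B l)) *
          ∏ l ∈ (Finset.Icc i s).erase j, (B j - B l)))
      = 0 := by
  classical
  set S : Finset (ℤ ⊕ ℤ) := (Finset.Icc r i).disjSum (Finset.Icc i s) with hS
  set v : ℤ ⊕ ℤ → ℂ := Sum.elim (fun j => -B j) B with hv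
  have m1 : ∀ j ∈ Finset.Icc r i, j ∈ Finset.Icc r s := by
    intro j hj; rw [Finset.mem_Icc] at *; omega
  have m2 : ∀ j ∈ Finset.Icc i s, j ∈ Finset.Icc r s := by
    intro j hj; rw [Finset.mem_Icc] at *; omega
  have hinj : Set.InjOn v S := by
    rintro (a | a) ha (b | b) hb hab
    · have ha := m1 a (Finset.inl_mem_disjSum.1 ha)
      have hb := m1 b (Finset.inl_mem_disjSum.1 hb)
      simp only [hv, Sum.elim_inl, neg_inj] at hab
      rw [hdist (by simpa using ha) (by simpa using hb) hab]
    · have ha := m1 a (Finset.inl_mem_disjSum.1 ha)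
      have hb := m2 b (Finset.inr_mem_disjSum.1 hb)
      simp only [hv, Sum.elim_inl, Sum.elim_inr] at hab
      exact absurd (by rw [← hab]; ring) (hsum a ha b hb)
    · have ha := m2 a (Finset.inr_mem_disjSum.1 ha)
      have hb := m1 b (Finset.inl_mem_disjSum.1 hb)
      simp only [hv, Sum.elim_inl, Sum.elim_inr] at hab
      exact absurd (by rw [hab]; ring) (hsum a ha b hb)
    · have ha := m2 a (Finset.inr_mem_disjSum.1 ha)
      have hb := m2 b (Finset.inr_mem_disjSum.1 hb)
      simp only [hv, Sum.elim_inr] at hab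
      rw [hdist (by simpa using ha) (by simpa using hb) hab]
  obtain ⟨p, hp⟩ : ∃ p : ℕ, i = r + p := ⟨(i - r).toNat, by omega⟩
  obtain ⟨q, hq⟩ : ∃ q : ℕ, s = i + q := ⟨(s - i).toNat, by omega⟩
  have c1 : (Finset.Icc r i).card = p + 1 := by rw [Int.card_Icc]; omega
  have c2 : (Finset.Icc i s).card = q + 1 := by rw [Int.card_Icc]; omega
  have hcard : S.card = p + q + 2 := by
    rw [hS, Finset.card_disjSum, c1, c2]; ring
  have hz : (-1 : ℂ) ^ (s - r + 1) = (-1) ^ (p + q + 1) := by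
    rw [show s - r + 1 = ((p + q + 1 : ℕ) : ℤ) by push_cast; omega, zpow_natCast]
  have key := Lagrange.coeff_eq_sum (P := (Polynomial.X ^ (k - 1) : Polynomial ℂ)) hinj
    (by rw [Polynomial.degree_X_pow, hcard]; norm_cast; omega)
  rw [hcard, Polynomial.coeff_X_pow, if_neg (by omega), hS, Finset.sum_disjSum] at key
  have e1 : ∀ j, ((Finset.Icc r i).disjSum (Finset.Icc i s)).erase (Sum.inl j)
      = ((Finset.Icc r i).erase j).disjSum (Finset.Icc i s) := by
    intro j; ext (x | x) <;> simp
  have e2 : ∀ j, ((Finset.Icc r i).disjSum (Finset.Icc i s)).erase (Sum.inr j)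
      = (Finset.Icc r i).disjSum ((Finset.Icc i s).erase j) := by
    intro j; ext (x | x) <;> simp
  simp only [e1, e2, Finset.prod_disjSum, hv, Sum.elim_inl, Sum.elim_inr,
    Polynomial.eval_pow, Polynomial.eval_X] at key
  have hsq : ((-1 : ℂ) ^ (p + q + 1)) * (-1) ^ (p + q + 1) = 1 := by
    rw [← mul_pow]; simp
  have hinv : ((-1 : ℂ) ^ (p + q + 1))⁻¹ = (-1) ^ (p + q + 1) := by
    rw [← inv_pow]; norm_num
  rw [← mul_zero ((-1 : ℂ) ^ (p + q + 1)), key, mul_add, Finset.mul_sum, Finset.mul_sum, hz]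
  congr 1
  · refine Finset.sum_congr rfl fun j hj => ?_
    have a1 : ∏ l ∈ (Finset.Icc r i).erase j, (-B j - -B l)
        = (-1) ^ p * ∏ l ∈ (Finset.Icc r i).erase j, (B j - B l) := by
      rw [show p = ((Finset.Icc r i).erase j).card by rw [Finset.card_erase_of_mem hj, c1]; rfl,
        ← Finset.prod_const, ← Finset.prod_mul_distrib]
      exact Finset.prod_congr rfl fun l _ => by ring
    have a2 : ∏ l ∈ Finset.Icc i s, (-B j - B l)
        = (-1) ^ (q + 1) * ∏ l ∈ Finset.Icc i s, (B j + B l) := by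
      rw [← c2, ← Finset.prod_const, ← Finset.prod_mul_distrib]
      exact Finset.prod_congr rfl fun l _ => by ring
    rw [a1, a2, mul_mul_mul_comm, ← pow_add, ← add_assoc, one_div, div_eq_mul_inv, mul_inv ((-1 : ℂ) ^ _),
      hinv]
    linear_combination (-(-B j) ^ (k - 1) * ((∏ l ∈ (Finset.Icc r i).erase j, (B j - B l)) *
          ∏ l ∈ Finset.Icc i s, (B j + B l))⁻¹) * hsq
  · refine Finset.sum_congr rfl fun j hj => ?_
    simp only [sub_neg_eq_add]
    ring
end

section
/- Let r ≤ i ≤ s be integers, n = s−r+1, k an integer with 1 ≤ k ≤ n, and let B_r, …, B_s be pairwise distinct positive real numbers. Then lim_{ε→0⁺} ∫₀^∞ A^{k−1}/(∏_{j=r}^{i}(A+B_j) · ∏_{j=i}^{s}(A−B_j+iε)) dA = (−1)^{n+1}·( Σ_{j=r}^{i} (−B_j)^{k−1}·(log B_j)·F_{ji} + Σ_{j=i}^{s} B_j^{k−1}·(log B_j + πi)·G_{ji} ), where F_{ji} = 1/(∏_{l=r, l≠j}^{i}(B_j−B_l)·∏_{l=i}^{s}(B_j+B_l)) and G_{ji}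 = (−1)ⁿ/(∏_{l=r}^{i}(B_j+B_l)·∏_{l=i, l≠j}^{s}(B_j−B_l)). -/
open Finset MeasureTheory Filter

lemma aux_tendsto_ratio (p : ℂ) :
    Tendsto (fun A : ℝ => 1 - p / (A : ℂ)) atTop (nhds 1) := by
  have h : Tendsto (fun A : ℝ => (A : ℂ)⁻¹) atTop (nhds 0) := by
    have := (Complex.continuous_ofReal.tendsto 0).comp tendsto_inv_atTop_zero
    simpa [Function.comp_def] using this
  have := (h.const_mul p).const_sub 1
  simpa [div_eq_mul_inv] using this

lemma aux_isBigO_inv (p : ℂ) :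
    (fun A : ℝ => ((A : ℂ) - p)⁻¹) =O[atTop] (fun A : ℝ => A⁻¹) := by
  have h1 : Tendsto (fun A : ℝ => (1 - p / (A : ℂ))⁻¹) atTop (nhds 1) := by
    simpa using (aux_tendsto_ratio p).inv₀ one_ne_zero
  have h3 : (fun A : ℝ => (A : ℂ)⁻¹) =O[atTop] (fun A : ℝ => A⁻¹) :=
    Asymptotics.IsBigO.of_bound 1 (Eventually.of_forall fun A => by simp)
  have h2 := (h1.isBigO_one ℝ).mul h3
  simp only [one_mul] at h2
  refine h2.congr' ?_ EventuallyEq.rfl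
  filter_upwards [eventually_gt_atTop 0] with A hA
  have hA' : (A : ℂ) ≠ 0 := by exact_mod_cast hA.ne'
  rw [← mul_inv]
  congr 1
  field_simp

lemma aux_isBigO {ι : Type*} (S : Finset ι) (p : ι → ℂ) (m : ℕ) (hm : m + 2 ≤ #S) :
    (fun A : ℝ => (A : ℂ) ^ m / ∏ j ∈ S, ((A : ℂ) - p j)) =O[atTop]
      (fun A : ℝ => A ^ (-2 : ℝ)) := by
  have h1 : (fun A : ℝ => ∏ j ∈ S, ((A : ℂ) - p j)⁻¹) =O[atTop]
      (fun A : ℝ => ∏ j ∈ S, A⁻¹) :=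
    Asymptotics.IsBigO.finsetProd fun j _ => aux_isBigO_inv (p j)
  have h0 : (fun A : ℝ => (A : ℂ) ^ m) =O[atTop] (fun A : ℝ => A ^ m) := by
    refine Asymptotics.IsBigO.of_bound 1 (Eventually.of_forall fun A => ?_)
    simp
  have h2 := h0.mul h1
  simp only [Finset.prod_inv_distrib, ← div_eq_mul_inv] at h2
  refine h2.trans (Asymptotics.IsBigO.of_bound 1 ?_)
  filter_upwards [eventually_ge_atTop 1] with A hA
  have hA0 : (0:ℝ) < A := by linarith
  rw [one_mul, Finset.prod_const, Real.rpow_neg hA0.le, Real.norm_of_nonneg (by positivity),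
    Real.norm_of_nonneg (by positivity), div_le_iff₀ (by positivity)]
  obtain ⟨q, hq⟩ := Nat.exists_eq_add_of_le hm
  have h3 : (1:ℝ) ≤ A ^ q := one_le_pow₀ hA
  have e : (A ^ (2:ℝ))⁻¹ * A ^ #S = A ^ m * A ^ q := by
    rw [hq, pow_add, pow_add]
    have : A ^ (2:ℝ) = A ^ 2 := by norm_cast
    rw [this]; field_simp
  rw [e]
  exact le_mul_of_one_le_right (by positivity) h3

lemma aux_integral {ι : Type*} [DecidableEq ι] (S : Finset ι) (p : ι → ℂ) (m : ℕ)
    (hm : m + 2 ≤ #S) (hinj : Set.InjOn p S)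
    (hp : ∀ j ∈ S, ∀ A : ℝ, 0 ≤ A → (A : ℂ) - p j ∈ Complex.slitPlane) :
    ∫ A in Set.Ioi (0 : ℝ), (A : ℂ) ^ m / ∏ j ∈ S, ((A : ℂ) - p j) =
      - ∑ j ∈ S, p j ^ m / (∏ l ∈ S.erase j, (p j - p l)) * Complex.log (- p j) := by
  have hdeg : (Polynomial.X ^ m : Polynomial ℂ).degree < #S := by
    rw [Polynomial.degree_X_pow]; exact_mod_cast (by omega : m < #S)
  have hsum : ∑ j ∈ S, p j ^ m / (∏ l ∈ S.erase j, (p j - p l)) = 0 := by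
    have := Lagrange.coeff_eq_sum hinj hdeg
    rw [Polynomial.coeff_X_pow, if_neg (by omega)] at this
    simpa using this.symm
  have hpf : ∀ A : ℝ, 0 ≤ A → (A : ℂ) ^ m / ∏ j ∈ S, ((A : ℂ) - p j) =
      ∑ j ∈ S, p j ^ m / (∏ l ∈ S.erase j, (p j - p l)) * ((A : ℂ) - p j)⁻¹ := by
    intro A hA
    have hne : ∀ j ∈ S, (A : ℂ) - p j ≠ 0 := fun j hj =>
      Complex.slitPlane_ne_zero (hp j hj A hA)
    have h1 := congrArg (Polynomial.eval (A : ℂ)) (Lagrange.eq_interpolate hinj hdeg)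
    rw [Lagrange.eval_interpolate_not_at_node _ (fun j hj => sub_ne_zero.1 (hne j hj)),
      Lagrange.eval_nodal] at h1
    simp only [Polynomial.eval_pow, Polynomial.eval_X] at h1
    rw [h1, mul_div_cancel_left₀ _ (Finset.prod_ne_zero_iff.2 hne)]
    refine Finset.sum_congr rfl fun j _ => ?_
    rw [Lagrange.nodalWeight, Finset.prod_inv_distrib]
    ring
  have hderiv : ∀ A ∈ Set.Ici (0:ℝ), HasDerivAt
      (fun A : ℝ => ∑ j ∈ S, p j ^ m / (∏ l ∈ S.erase j, (p j - p l)) * Complex.log ((A : ℂ) - p j))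
      ((A : ℂ) ^ m / ∏ j ∈ S, ((A : ℂ) - p j)) A := by
    intro A hA
    rw [hpf A hA]
    refine HasDerivAt.fun_sum fun j hj => ?_
    refine HasDerivAt.const_mul _ ?_
    have h1 : HasDerivAt (fun A : ℝ => (A : ℂ) - p j) 1 A :=
      (Complex.ofRealCLM.hasDerivAt (x := A)).sub_const (p j)
    simpa using h1.clog_real (hp j hj A hA)
  have hcont : ContinuousOn (fun A : ℝ => (A : ℂ) ^ m / ∏ j ∈ S, ((A : ℂ) - p j)) (Set.Ici 0) := by
    refine ContinuousOn.div (by fun_prop) (by fun_prop) fun A hA => ?_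
    exact Finset.prod_ne_zero_iff.2 fun j hj => Complex.slitPlane_ne_zero (hp j hj A hA)
  have hint : IntegrableOn (fun A : ℝ => (A : ℂ) ^ m / ∏ j ∈ S, ((A : ℂ) - p j)) (Set.Ioi 0) := by
    refine IntegrableOn.mono_set ?_ Set.Ioi_subset_Ici_self
    exact (hcont.locallyIntegrableOn measurableSet_Ici).integrableOn_of_isBigO_atTop
      (aux_isBigO S p m hm) (integrableAtFilter_rpow_atTop_iff.2 (by norm_num))
  have hlim : Tendsto (fun A : ℝ => ∑ j ∈ S, p j ^ m / (∏ l ∈ S.erase j, (p j - p l)) *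
      Complex.log ((A : ℂ) - p j)) atTop (nhds 0) := by
    have h1 : Tendsto (fun A : ℝ => ∑ j ∈ S, p j ^ m / (∏ l ∈ S.erase j, (p j - p l)) *
        Complex.log (1 - p j / (A : ℂ))) atTop (nhds (∑ j ∈ S, p j ^ m /
          (∏ l ∈ S.erase j, (p j - p l)) * Complex.log 1)) :=
      tendsto_finsetSum _ fun j _ => ((aux_tendsto_ratio (p j)).clog (by simp)).const_mul _
    simp only [Complex.log_one, mul_zero, Finset.sum_const_zero] at h1
    refine h1.congr' ?_
    filter_upwards [eventually_gt_atTop 0] with A hA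
    have hA' : (A : ℂ) ≠ 0 := by exact_mod_cast hA.ne'
    have h2 : ∀ j ∈ S, Complex.log ((A : ℂ) - p j) =
        (Real.log A : ℂ) + Complex.log (1 - p j / (A : ℂ)) := by
      intro j hj
      have e : (A : ℂ) - p j = A * (1 - p j / (A : ℂ)) := by field_simp
      have hne := Complex.slitPlane_ne_zero (hp j hj A hA.le)
      rw [e] at hne ⊢
      exact Complex.log_ofReal_mul hA (right_ne_zero_of_mul hne)
    symm
    rw [Finset.sum_congr rfl fun j hj => by rw [h2 j hj, mul_add], Finset.sum_add_distrib,
      ← Finset.sum_mul, hsum, zero_mul, zero_add]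
  rw [integral_Ioi_of_hasDerivAt_of_tendsto' hderiv hint hlim]
  simp

lemma erase_inl (s t : Finset ℤ) (a : ℤ) :
    (s.disjSum t).erase (Sum.inl a) = (s.erase a).disjSum t := by
  ext x; rcases x with x | x <;> simp

lemma erase_inr (s t : Finset ℤ) (a : ℤ) :
    (s.disjSum t).erase (Sum.inr a) = s.disjSum (t.erase a) := by
  ext x; rcases x with x | x <;> simp

theorem basic_integral_i0 (r i s : ℤ) (hri : r ≤ i) (his : i ≤ s) (B : ℤ → ℝ)
    (hpos : ∀ j ∈ Finset.Icc r s, 0 < B j)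
    (hdist : Set.InjOn B (Set.Icc r s))
    (k : ℕ) (hk : 1 ≤ k) (hk' : (k : ℤ) ≤ s - r + 1) :
    Tendsto
      (fun ε : ℝ => ∫ A in Set.Ioi (0 : ℝ),
        (A : ℂ) ^ (k - 1) /
          ((∏ j ∈ Finset.Icc r i, ((A : ℂ) + (B j : ℂ))) *
            ∏ j ∈ Finset.Icc i s, ((A : ℂ) - (B j : ℂ) + Complex.I * (ε : ℂ))))
      (nhdsWithin 0 (Set.Ioi 0))
      (nhds ((-1 : ℂ) ^ (s - r + 1 + 1) *
        ((∑ j ∈ Finset.Icc r i, (-(B j : ℂ)) ^ (k - 1) * ((Real.log (B j) : ℂ)) *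
            (1 / ((∏ l ∈ (Finset.Icc r i).erase j, ((B j : ℂ) - (B l : ℂ))) *
              ∏ l ∈ Finset.Icc i s, ((B j : ℂ) + (B l : ℂ)))))
          + ∑ j ∈ Finset.Icc i s, (B j : ℂ) ^ (k - 1) *
              ((Real.log (B j) : ℂ) + Real.pi * Complex.I) *
            ((-1 : ℂ) ^ (s - r + 1) /
              ((∏ l ∈ Finset.Icc r i, ((B j : ℂ) + (B l : ℂ))) *
                ∏ l ∈ (Finset.Icc i s).erase j, ((B j : ℂ) - (B l : ℂ))))))) := by
  have hposL : ∀ j ∈ Finset.Icc r i, 0 < B j := fun j hj => hpos j (by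
    simp only [Finset.mem_Icc] at hj ⊢; omega)
  have hposR : ∀ j ∈ Finset.Icc i s, 0 < B j := fun j hj => hpos j (by
    simp only [Finset.mem_Icc] at hj ⊢; omega)
  have hinjL : ∀ j ∈ Finset.Icc r i, ∀ l ∈ Finset.Icc r i, B j = B l → j = l := by
    intro j hj l hl h
    simp only [Finset.mem_Icc] at hj hl
    exact hdist ⟨by omega, by omega⟩ ⟨by omega, by omega⟩ h
  have hinjR : ∀ j ∈ Finset.Icc i s, ∀ l ∈ Finset.Icc i s, B j = B l → j = l := by
    intro j hj l hl h
    simp only [Finset.mem_Icc] at hj hl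
    exact hdist ⟨by omega, by omega⟩ ⟨by omega, by omega⟩ h
  -- the poles
  let p : ℝ → ℤ ⊕ ℤ → ℂ := fun ε =>
    Sum.elim (fun j => -(B j : ℂ)) (fun j => (B j : ℂ) - Complex.I * (ε : ℂ))
  have hpinj : ∀ ε : ℝ, Set.InjOn (p ε) ((Finset.Icc r i).disjSum (Finset.Icc i s)) := by
    rintro ε (j | j) hj (l | l) hl h
    · simp only [Finset.mem_coe, Finset.inl_mem_disjSum] at hj hl
      have := congrArg Complex.re h
      simp [p] at this
      rw [hinjL j hj l hl this]
    · simp only [Finset.mem_coe, Finset.inl_mem_disjSum, Finset.inr_mem_disjSum] at hj hl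
      have := congrArg Complex.re h
      simp [p] at this
      linarith [hposL j hj, hposR l hl]
    · simp only [Finset.mem_coe, Finset.inl_mem_disjSum, Finset.inr_mem_disjSum] at hj hl
      have := congrArg Complex.re h
      simp [p] at this
      linarith [hposL l hl, hposR j hj]
    · simp only [Finset.mem_coe, Finset.inr_mem_disjSum] at hj hl
      have := congrArg Complex.re h
      simp [p] at this
      rw [hinjR j hj l hl this]
  have hcard : k - 1 + 2 ≤ #((Finset.Icc r i).disjSum (Finset.Icc i s)) := by
    rw [Finset.card_disjSum, Int.card_Icc, Int.card_Icc]; omega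
  have key : ∀ ε : ℝ, ε ∈ Set.Ioi (0:ℝ) →
      - ∑ j ∈ (Finset.Icc r i).disjSum (Finset.Icc i s), p ε j ^ (k - 1) /
        (∏ l ∈ ((Finset.Icc r i).disjSum (Finset.Icc i s)).erase j, (p ε j - p ε l)) *
          Complex.log (- p ε j) =
      ∫ A in Set.Ioi (0 : ℝ),
        (A : ℂ) ^ (k - 1) /
          ((∏ j ∈ Finset.Icc r i, ((A : ℂ) + (B j : ℂ))) *
            ∏ j ∈ Finset.Icc i s, ((A : ℂ) - (B j : ℂ) + Complex.I * (ε : ℂ))) := by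
    intro ε hε
    rw [← aux_integral _ (p ε) (k - 1) hcard (hpinj ε)]
    · refine integral_congr_ae (Eventually.of_forall fun A => ?_)
      simp only [Finset.prod_disjSum, p, Sum.elim_inl, Sum.elim_inr, sub_neg_eq_add, sub_sub_eq_add_sub,
        add_sub_right_comm]
    · rintro (j | j) hj A hA
      · simp only [Finset.inl_mem_disjSum] at hj
        left
        simp [p]
        linarith [hposL j hj]
      · right
        simp [p]
        exact (ne_of_gt hε)
  refine Tendsto.congr' (eventually_mem_nhdsWithin.mono key) ?_
  have hpc : ∀ j, Tendsto (fun ε => p ε j) (nhdsWithin 0 (Set.Ioi 0)) (nhds (p 0 j)) := by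
    intro j
    refine tendsto_nhdsWithin_of_tendsto_nhds (Continuous.tendsto ?_ 0)
    rcases j with j | j <;> simp only [p, Sum.elim_inl, Sum.elim_inr] <;> fun_prop
  have hlim : Tendsto (fun ε : ℝ =>
      - ∑ j ∈ (Finset.Icc r i).disjSum (Finset.Icc i s), p ε j ^ (k - 1) /
        (∏ l ∈ ((Finset.Icc r i).disjSum (Finset.Icc i s)).erase j, (p ε j - p ε l)) *
          Complex.log (- p ε j)) (nhdsWithin 0 (Set.Ioi 0))
      (nhds (- ∑ j ∈ (Finset.Icc r i).disjSum (Finset.Icc i s), p 0 j ^ (k - 1) /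
        (∏ l ∈ ((Finset.Icc r i).disjSum (Finset.Icc i s)).erase j, (p 0 j - p 0 l)) *
          Sum.elim (fun j => (Real.log (B j) : ℂ))
            (fun j => (Real.log (B j) : ℂ) + Real.pi * Complex.I) j)) := by
    refine (tendsto_finsetSum _ fun j hj => ?_).neg
    refine Tendsto.mul (Tendsto.div ((hpc j).pow _)
      (tendsto_finsetProd _ fun l _ => (hpc j).sub (hpc l)) ?_) ?_
    · refine Finset.prod_ne_zero_iff.2 fun l hl => sub_ne_zero.2 fun h => ?_
      rw [Finset.mem_erase] at hl
      exact hl.1 (hpinj 0 hl.2 hj h.symm)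
    · rcases j with j | j
      · simp only [Finset.inl_mem_disjSum] at hj
        simp only [p, Sum.elim_inl, neg_neg]
        rw [Complex.ofReal_log (hposL j hj).le]
        exact tendsto_const_nhds
      · simp only [Finset.inr_mem_disjSum] at hj
        have hb := hposR j hj
        have h1 := Complex.tendsto_log_nhdsWithin_im_nonneg_of_re_neg_of_im_zero
          (z := -(B j : ℂ)) (by simpa using hb) (by simp)
        have e : ‖-(B j : ℂ)‖ = B j := by simp [abs_of_pos hb]
        rw [e] at h1
        refine h1.comp (tendsto_nhdsWithin_iff.2 ⟨?_, ?_⟩)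
        · have := (hpc (Sum.inr j)).neg
          simpa [p] using this
        · refine eventually_mem_nhdsWithin.mono fun ε hε => ?_
          simpa [p] using (le_of_lt hε)
  convert hlim using 2
  simp only [Finset.sum_disjSum, erase_inl, erase_inr, Finset.prod_disjSum, p, Sum.elim_inl, Sum.elim_inr,
    Complex.ofReal_zero, mul_zero, sub_zero]
  have hm1 : (-1 : ℂ) ≠ 0 := by norm_num
  have hsq : (-1 : ℂ) ^ (s - r + 1) * (-1 : ℂ) ^ (s - r + 1) = 1 := by
    rw [← mul_zpow]; simp
  rw [zpow_add₀ hm1 (s - r + 1) 1, zpow_one, mul_add, neg_add, Finset.mul_sum, Finset.mul_sum,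
    ← Finset.sum_neg_distrib, ← Finset.sum_neg_distrib]
  congr 1
  · refine Finset.sum_congr rfl fun j hj => ?_
    have e1 : ∏ l ∈ (Finset.Icc r i).erase j, (-(B j : ℂ) - -(B l : ℂ)) =
        (-1) ^ (i - r) * ∏ l ∈ (Finset.Icc r i).erase j, ((B j : ℂ) - (B l : ℂ)) := by
      have : (-1 : ℂ) ^ (i - r) = (-1) ^ #((Finset.Icc r i).erase j) := by
        rw [Finset.card_erase_of_mem hj, Int.card_Icc, ← zpow_natCast]
        congr 1; omega
      rw [this, ← Finset.prod_const, ← Finset.prod_mul_distrib]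
      exact Finset.prod_congr rfl fun l _ => by ring
    have e2 : ∏ l ∈ Finset.Icc i s, (-(B j : ℂ) - (B l : ℂ)) =
        (-1) ^ (s - i + 1) * ∏ l ∈ Finset.Icc i s, ((B j : ℂ) + (B l : ℂ)) := by
      have : (-1 : ℂ) ^ (s - i + 1) = (-1) ^ #(Finset.Icc i s) := by
        rw [Int.card_Icc, ← zpow_natCast]
        congr 1; omega
      rw [this, ← Finset.prod_const, ← Finset.prod_mul_distrib]
      exact Finset.prod_congr rfl fun l _ => by ring
    have e3 : (-1 : ℂ) ^ (s - r + 1) = (-1) ^ (i - r) * (-1) ^ (s - i + 1) := by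
      rw [← zpow_add₀ hm1]; congr 1; ring
    rw [e1, e2, mul_mul_mul_comm ((-1 : ℂ) ^ (i - r)), ← e3, div_mul_eq_div_div _ ((-1 : ℂ) ^ (s - r + 1)), div_eq_mul_inv _ ((-1 : ℂ) ^ (s - r + 1)),
      inv_eq_of_mul_eq_one_left hsq]
    ring
  · refine Finset.sum_congr rfl fun j hj => ?_
    have e1 : ∏ l ∈ Finset.Icc r i, ((B j : ℂ) - -(B l : ℂ)) =
        ∏ l ∈ Finset.Icc r i, ((B j : ℂ) + (B l : ℂ)) := by simp
    rw [e1]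
    linear_combination (-(B j : ℂ) ^ (k - 1) *
              ((Real.log (B j) : ℂ) + Real.pi * Complex.I) /
              ((∏ l ∈ Finset.Icc r i, ((B j : ℂ) + (B l : ℂ))) *
                ∏ l ∈ (Finset.Icc i s).erase j, ((B j : ℂ) - (B l : ℂ)))) * hsq
end

section
/- Let r ≤ s be integers, n = s−r+1, and let B_r, …, B_s be pairwise distinct positive real numbers. For 1 ≤ k ≤ n and r ≤ i ≤ s set J_{k,i} = 2·i^{s−i}·√(B_i)·√(∏_{j=r}^{s} B_j)·Σ_{j=r}^{i} (−B_j)^{k−1}·F_{ji}, where F_{ji} = 1/(∏_{l=r, l≠j}^{i}(B_j−B_l)·∏_{l=i}^{s}(B_j+B_l)). Then ∏_{r ≤ j < k ≤ s} ( i·(B_j+B_k)/√(B_j B_k) ) · det( (J_{k,i})_{1≤k≤n, r≤i≤s} ) = 1. -/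
open Finset

lemma prod_Ioi_swap_aux {n : ℕ} (f : Fin n → Fin n → ℂ) :
    ∏ i, ∏ k ∈ Finset.Ioi i, f i k = ∏ i, ∏ k ∈ Finset.Iio i, f k i := by
  apply Finset.prod_comm'
  intro x y
  simp

lemma prod_sqrt_aux {n : ℕ} (x : Fin n → ℂ) :
    (∏ i, ∏ k ∈ Finset.Ioi i, (x i * x k)) * ∏ i, x i = ∏ _i : Fin n, ∏ k, x k := by
  have h1 : (∏ i, ∏ k ∈ Finset.Ioi i, (x i * x k))
      = (∏ i, ∏ k ∈ Finset.Iio i, x k) * ∏ i, ∏ k ∈ Finset.Ioi i, x k := by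
    rw [← prod_Ioi_swap_aux (fun i _ => x i)]
    simp only [Finset.prod_mul_distrib]
  rw [h1, ← Finset.prod_mul_distrib, ← Finset.prod_mul_distrib]
  refine Finset.prod_congr rfl fun i _ => ?_
  have hd : Disjoint (Finset.Iio i) (Finset.Ioi i) := by
    rw [Finset.disjoint_left]
    intro a ha hb
    simp only [Finset.mem_Iio, Finset.mem_Ioi] at ha hb
    exact absurd ha (not_lt.mpr hb.le)
  have hn : i ∉ Finset.Iio i ∪ Finset.Ioi i := by simp
  rw [← Finset.prod_union hd, mul_comm, ← Finset.prod_insert hn]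
  refine Finset.prod_congr ?_ fun _ _ => rfl
  ext a
  simp only [Finset.mem_insert, Finset.mem_union, Finset.mem_Iio, Finset.mem_Ioi,
    Finset.mem_univ, iff_true]
  rcases lt_trichotomy a i with h | h | h <;> simp [h]

lemma det_fin_aux {n : ℕ} (x b : Fin n → ℂ) (hb : ∀ i, b i = x i * x i)
    (hx : ∀ i, x i ≠ 0) (hs : ∀ i j, b i + b j ≠ 0) (hd : ∀ i j, i ≠ j → b i - b j ≠ 0) :
    (∏ j, ∏ k ∈ Finset.Ioi j, (Complex.I * (b j + b k) / (x j * x k)))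
      * Matrix.det (Matrix.of fun (k i : Fin n) =>
          2 * Complex.I ^ (n - 1 - (i : ℕ)) * x i * (∏ j, x j) *
            ∑ j ∈ Finset.Iic i, (-(b j)) ^ (k : ℕ) *
                (1 / ((∏ l ∈ (Finset.Iic i).erase j, (b j - b l)) *
                  ∏ l ∈ Finset.Ici i, (b j + b l)))) = 1 := by
  set c : Fin n → ℂ := fun i => 2 * Complex.I ^ (n - 1 - (i : ℕ)) * x i * (∏ j, x j) with hc
  set F : Fin n → Fin n → ℂ := fun j i => 1 / ((∏ l ∈ (Finset.Iic i).erase j, (b j - b l)) *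
                  ∏ l ∈ Finset.Ici i, (b j + b l)) with hF
  set U : Matrix (Fin n) (Fin n) ℂ := Matrix.of fun j i => if j ≤ i then c i * F j i else 0 with hU
  have hM : (Matrix.of fun (k i : Fin n) => c i * ∑ j ∈ Finset.Iic i, (-(b j)) ^ (k : ℕ) * F j i)
      = (Matrix.vandermonde (fun j => - b j)).transpose * U := by
    ext k i
    simp only [Matrix.of_apply, Matrix.mul_apply, Matrix.transpose_apply,
      Matrix.vandermonde_apply, hU, mul_ite, mul_zero]
    rw [← Finset.sum_filter, Finset.mul_sum]
    refine Finset.sum_congr ?_ fun j _ => by ring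
    ext a; simp
  have hdU : U.det = ∏ i, c i * F i i := by
    rw [Matrix.det_of_isUpperTriangular]
    · simp [hU]
    · intro i j hij
      have : j < i := hij
      simp [hU, not_le.mpr this]
  have hFi : ∀ i, F i i = 1 / ((∏ l ∈ Finset.Iio i, (b i - b l)) *
      (2 * (x i * x i) * ∏ l ∈ Finset.Ioi i, (b i + b l))) := by
    intro i
    have e1 : (Finset.Iic i).erase i = Finset.Iio i := by ext a; simp [lt_iff_le_and_ne, and_comm]
    have e2 : Finset.Ici i = insert i (Finset.Ioi i) := by simp
    simp only [hF, e1]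
    rw [e2, Finset.prod_insert (by simp), ← two_mul, hb i]
  rw [hM, Matrix.det_mul, Matrix.det_transpose, Matrix.det_vandermonde, hdU]
  have hQ : (∏ j, x j) ≠ 0 := Finset.prod_ne_zero_iff.mpr fun i _ => hx i
  have hcF : ∀ i, c i * F i i = (∏ k ∈ Finset.Ioi i, (Complex.I * (b i + b k)⁻¹)) *
      (∏ k ∈ Finset.Iio i, (b i - b k)⁻¹) * ((∏ j, x j) * (x i)⁻¹) := by
    intro i
    rw [hFi i, Finset.prod_mul_distrib, Finset.prod_inv_distrib, Finset.prod_inv_distrib,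
      Finset.prod_const, Fin.card_Ioi]
    simp only [hc]
    have h1 : ∏ l ∈ Finset.Iio i, (b i - b l) ≠ 0 :=
      Finset.prod_ne_zero_iff.mpr fun l hl => hd _ _ (Finset.mem_Iio.mp hl).ne'
    have h2 : ∏ l ∈ Finset.Ioi i, (b i + b l) ≠ 0 :=
      Finset.prod_ne_zero_iff.mpr fun l hl => hs _ _
    have := hx i
    field_simp
  simp only [hcF, Finset.prod_mul_distrib (s := (Finset.univ : Finset (Fin n)))]
  rw [← prod_Ioi_swap_aux (fun k i => (b i - b k)⁻¹), ← prod_sqrt_aux x]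
  have hxx : (∏ i, ∏ k ∈ Finset.Ioi i, (x i * x k)) ≠ 0 :=
    Finset.prod_ne_zero_iff.mpr fun i _ => Finset.prod_ne_zero_iff.mpr fun k _ =>
      mul_ne_zero (hx i) (hx k)
  rw [Finset.prod_inv_distrib, mul_inv_cancel_right₀ hQ]
  simp only [← Finset.prod_mul_distrib]
  refine Finset.prod_eq_one fun i _ => Finset.prod_eq_one fun k hk => ?_
  have h1 := hd k i (Finset.mem_Ioi.mp hk).ne'
  have h2 := hs i k
  have h3 := hx i
  have h4 := hx k
  have h5 : -b k - -b i = -(b k - b i) := by ring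
  rw [h5]
  field_simp
  simp

/-- The normalization identity `⟨1⟩ = 1` for the determinant formula of XXZ
correlation functions at the free-fermion point `ν = 1/2`:
`∏_{r≤j<k≤s} (i(B_j+B_k)/√(B_jB_k)) · det(J_{k,i}) = 1`. -/
theorem det_normalization (r s : ℤ) (hrs : r ≤ s) (B : ℤ → ℝ)
    (hpos : ∀ j ∈ Finset.Icc r s, 0 < B j)
    (hdist : Set.InjOn B (Set.Icc r s)) :
    (∏ j ∈ Finset.Icc r s, ∏ k ∈ (Finset.Icc r s).filter (fun k => j < k),
        (Complex.I * ((B j : ℂ) + (B k : ℂ)) / (Real.sqrt (B j * B k) : ℂ)))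
      * Matrix.det (Matrix.of fun (k i : Fin (s - r + 1).toNat) =>
          2 * Complex.I ^ (s - (r + ((i : ℕ) : ℤ))) *
            (Real.sqrt (B (r + ((i : ℕ) : ℤ))) : ℂ) *
            (Real.sqrt (∏ j ∈ Finset.Icc r s, B j) : ℂ) *
            ∑ j ∈ Finset.Icc r (r + ((i : ℕ) : ℤ)),
              (-(B j : ℂ)) ^ (k : ℕ) *
                (1 / ((∏ l ∈ (Finset.Icc r (r + ((i : ℕ) : ℤ))).erase j,
                    ((B j : ℂ) - (B l : ℂ))) *
                  ∏ l ∈ Finset.Icc (r + ((i : ℕ) : ℤ)) s, ((B j : ℂ) + (B l : ℂ)))))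
      = 1 := by
  obtain ⟨n, rfl⟩ : ∃ n : ℕ, s = r + n := ⟨(s - r).toNat, by omega⟩
  have hN : (r + (n : ℤ) - r + 1).toNat = n + 1 := by omega
  generalize (r + (n : ℤ) - r + 1).toNat = N at hN
  subst hN
  set e : Fin (n + 1) ↪ ℤ := ⟨fun i => r + ((i : ℕ) : ℤ), fun i j h => by
    simp only [add_right_inj, Nat.cast_inj] at h
    exact Fin.ext h⟩ with he
  have hea : ∀ i : Fin (n + 1), r + ((i : ℕ) : ℤ) = e i := fun _ => rfl
  have hlt : ∀ i j : Fin (n + 1), e i < e j ↔ i < j := by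
    intro i j
    rw [← hea, ← hea, Fin.lt_def]; omega
  have hle : ∀ i j : Fin (n + 1), e i ≤ e j ↔ i ≤ j := by
    intro i j
    rw [← hea, ← hea, Fin.le_def]; omega
  have hmem : ∀ a : ℤ, a ∈ Finset.Icc r (r + n) ↔ ∃ i, e i = a := by
    intro a
    rw [Finset.mem_Icc]
    constructor
    · intro h
      exact ⟨⟨(a - r).toNat, by omega⟩, by rw [← hea]; simp only; omega⟩
    · rintro ⟨i, rfl⟩
      rw [← hea]; have := i.2; omega
  have hr : ∀ i, r ≤ e i := fun i => by rw [← hea]; omega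
  have hs : ∀ i, e i ≤ r + n := fun i => by rw [← hea]; have := i.2; omega
  have huniv : Finset.Icc r (r + n) = (Finset.univ : Finset (Fin (n + 1))).map e := by
    ext a; rw [hmem]; simp
  have hIoi : ∀ i, (Finset.Icc r (r + n)).filter (fun k => e i < k) = (Finset.Ioi i).map e := by
    intro i; ext a
    simp only [Finset.mem_filter, hmem, Finset.mem_map, Finset.mem_Ioi]
    constructor
    · rintro ⟨⟨j, rfl⟩, h⟩; exact ⟨j, (hlt _ _).1 h, rfl⟩
    · rintro ⟨j, h, rfl⟩; exact ⟨⟨j, rfl⟩, (hlt _ _).2 h⟩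
  have hIic : ∀ i, Finset.Icc r (e i) = (Finset.Iic i).map e := by
    intro i; ext a
    simp only [Finset.mem_map, Finset.mem_Iic]
    constructor
    · intro h
      rw [Finset.mem_Icc] at h
      obtain ⟨j, rfl⟩ := (hmem a).1 (Finset.mem_Icc.2 ⟨h.1, h.2.trans (hs i)⟩)
      exact ⟨j, (hle _ _).1 h.2, rfl⟩
    · rintro ⟨j, h, rfl⟩; exact Finset.mem_Icc.2 ⟨hr j, (hle _ _).2 h⟩
  have hIci : ∀ i, Finset.Icc (e i) (r + n) = (Finset.Ici i).map e := by
    intro i; ext a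
    simp only [Finset.mem_map, Finset.mem_Ici]
    constructor
    · intro h
      rw [Finset.mem_Icc] at h
      obtain ⟨j, rfl⟩ := (hmem a).1 (Finset.mem_Icc.2 ⟨(hr i).trans h.1, h.2⟩)
      exact ⟨j, (hle _ _).1 h.1, rfl⟩
    · rintro ⟨j, h, rfl⟩; exact Finset.mem_Icc.2 ⟨(hle _ _).2 h, hs j⟩
  have hp : ∀ i, 0 < B (e i) := fun i => hpos _ ((hmem _).2 ⟨i, rfl⟩)
  have hI : ∀ i : Fin (n + 1), Complex.I ^ (r + (n : ℤ) - e i)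
      = Complex.I ^ (n + 1 - 1 - (i : ℕ)) := by
    intro i
    rw [← zpow_natCast]
    congr 1
    rw [← hea]; have := i.2; omega
  have hsq : Real.sqrt (∏ j : Fin (n + 1), B (e j)) = ∏ j, Real.sqrt (B (e j)) :=
    Real.sqrt_prod _ fun i _ => (hp i).le
  have key := det_fin_aux (fun i => ((Real.sqrt (B (e i)) : ℝ) : ℂ)) (fun i => ((B (e i) : ℝ) : ℂ))
    (fun i => by
      rw [← Complex.ofReal_mul, Real.mul_self_sqrt (hp i).le])
    (fun i => by
      simp only [ne_eq, Complex.ofReal_eq_zero]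
      exact (Real.sqrt_pos.2 (hp i)).ne')
    (fun i j => by
      rw [← Complex.ofReal_add]
      exact Complex.ofReal_ne_zero.2 (add_pos (hp i) (hp j)).ne')
    (fun i j hij => by
      rw [← Complex.ofReal_sub]
      refine Complex.ofReal_ne_zero.2 (sub_ne_zero.2 fun h => hij ?_)
      exact e.injective (hdist ⟨hr i, hs i⟩ ⟨hr j, hs j⟩ h))
  refine Eq.trans ?_ key
  simp only [hea]
  congr 1
  · rw [huniv, Finset.prod_map]
    refine Finset.prod_congr rfl fun j _ => ?_
    rw [← huniv, hIoi, Finset.prod_map]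
    refine Finset.prod_congr rfl fun k _ => ?_
    rw [Real.sqrt_mul (hp j).le, Complex.ofReal_mul]
  · refine congrArg Matrix.det (Matrix.ext fun k i => ?_)
    rw [Matrix.of_apply, Matrix.of_apply]
    rw [hI, hIci, hIic, huniv, Finset.prod_map, hsq, Complex.ofReal_prod, Finset.sum_map]
    refine congrArg₂ (· * ·) rfl ?_
    refine Finset.sum_congr rfl fun j _ => ?_
    rw [← Finset.map_erase, Finset.prod_map, Finset.prod_map]
end

section
/- Let M ≤ N be integers, z₁, z₂ nonzero complex numbers with z₁ ≠ z₂, and S_M, …, S_N arbitrary complex numbers. Then (z₂/z₁)^{N+1}·∏_{j=M}^{N}(1+S_j z₂^{−1})(1−S_j z₁)/(1−z₂ z₁^{−1}) + Σ_{k=M}^{N} (z₂/z₁)^{k}·(1+S_k²)·∏_{j=M}^{k−1}(1+S_j z₂^{−1})(1−S_j z₁)·∏_{j=k+1}^{N}(1−S_j z₂)(1+S_j z₁^{−1}) + (z₂/z₁)^{M−1}·∏_{j=M}^{N}(1−S_j z₂)(1+S_j z₁^{−1})/(1−z₂^{−1} z₁) = 0. -/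
open Finset

theorem icc_succ_aux (M N : ℤ) (h : M ≤ N + 1) :
    Finset.Icc M (N + 1) = insert (N + 1) (Finset.Icc M N) := by
  ext x
  simp only [Finset.mem_Icc, Finset.mem_insert]
  omega

theorem telescope_aux (w : ℂ) (hw : w ≠ 0) (A B c : ℤ → ℂ)
    (h : ∀ j, w * A j - B j = (w - 1) * c j) (M N : ℤ) (hMN : M - 1 ≤ N) :
    (w - 1) * (∑ k ∈ Finset.Icc M N, w ^ k * c k *
      (∏ j ∈ Finset.Icc M (k - 1), A j) * (∏ j ∈ Finset.Icc (k + 1) N, B j))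
    = w ^ (N + 1) * (∏ j ∈ Finset.Icc M N, A j) - w ^ M * (∏ j ∈ Finset.Icc M N, B j) := by
  induction N, hMN using Int.le_induction with
  | base => simp
  | succ N hN ih =>
    have hm : ∀ M' : ℤ, N + 1 ∉ Finset.Icc M' N := by
      intro M'
      simp
    have hs : ∑ k ∈ Finset.Icc M N, w ^ k * c k *
        (∏ j ∈ Finset.Icc M (k - 1), A j) * (∏ j ∈ Finset.Icc (k + 1) (N + 1), B j)
        = B (N + 1) * ∑ k ∈ Finset.Icc M N, w ^ k * c k *
        (∏ j ∈ Finset.Icc M (k - 1), A j) * (∏ j ∈ Finset.Icc (k + 1) N, B j) := by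
      rw [Finset.mul_sum]
      refine Finset.sum_congr rfl fun k hk => ?_
      rw [Finset.mem_Icc] at hk
      rw [icc_succ_aux (k + 1) N (by omega), Finset.prod_insert (hm _)]
      ring
    have he : Finset.Icc (N + 1 + 1) (N + 1) = ∅ := Finset.Icc_eq_empty (by omega)
    rw [icc_succ_aux M N (by omega), Finset.sum_insert (hm _), Finset.prod_insert (hm _),
      Finset.prod_insert (hm _), hs, he, Finset.prod_empty, add_sub_cancel_right,
      zpow_add_one₀ hw (N + 1)]
    linear_combination B (N + 1) * ih
      - w ^ (N + 1) * (∏ j ∈ Finset.Icc M N, A j) * h (N + 1)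

/-- The rational-function identity at the core of the anticommutator computation
`[φ*(θ₁), φ(θ₂)]₊` for the inhomogeneous critical Ising (XY) transfer matrix. -/
theorem anticommutator_identity (M N : ℤ) (hMN : M ≤ N) (z₁ z₂ : ℂ)
    (h₁ : z₁ ≠ 0) (h₂ : z₂ ≠ 0) (hne : z₁ ≠ z₂) (S : ℤ → ℂ) :
    (z₂ / z₁) ^ (N + 1) *
        (∏ j ∈ Finset.Icc M N, ((1 + S j * z₂⁻¹) * (1 - S j * z₁))) / (1 - z₂ * z₁⁻¹)
      + (∑ k ∈ Finset.Icc M N, (z₂ / z₁) ^ k * (1 + S k ^ 2) *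
          (∏ j ∈ Finset.Icc M (k - 1), ((1 + S j * z₂⁻¹) * (1 - S j * z₁))) *
          (∏ j ∈ Finset.Icc (k + 1) N, ((1 - S j * z₂) * (1 + S j * z₁⁻¹))))
      + (z₂ / z₁) ^ (M - 1) *
          (∏ j ∈ Finset.Icc M N, ((1 - S j * z₂) * (1 + S j * z₁⁻¹))) / (1 - z₂⁻¹ * z₁)
      = 0 := by
  have hw : z₂ / z₁ ≠ 0 := div_ne_zero h₂ h₁
  have hw1 : z₂ / z₁ - 1 ≠ 0 := by
    intro h
    rw [sub_eq_zero, div_eq_one_iff_eq h₁] at h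
    exact hne h.symm
  have key := telescope_aux (z₂ / z₁) hw (fun j => (1 + S j * z₂⁻¹) * (1 - S j * z₁))
    (fun j => (1 - S j * z₂) * (1 + S j * z₁⁻¹)) (fun j => 1 + S j ^ 2)
    (by intro j; field_simp; ring) M N (by omega)
  have e1 : 1 - z₂ * z₁⁻¹ = -(z₂ / z₁ - 1) := by ring
  have e2 : 1 - z₂⁻¹ * z₁ = (z₂ / z₁ - 1) / (z₂ / z₁) := by field_simp
  rw [e1, e2, zpow_sub_one₀ hw]
  generalize z₂ / z₁ = w at *
  have key2 := eq_div_of_mul_eq hw1 ((mul_comm _ _).trans key)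
  beta_reduce at key2
  rw [key2]
  generalize (∏ j ∈ Finset.Icc M N, ((1 + S j * z₂⁻¹) * (1 - S j * z₁))) = P
  generalize (∏ j ∈ Finset.Icc M N, ((1 - S j * z₂) * (1 + S j * z₁⁻¹))) = Q
  rw [div_neg]
  field_simp
  ring
end

section
/- Let M ≤ N be integers and γ : ℤ → ℂ with γ_j = 0 for j ∉ [M,N]. Set S_j = sinh γ_j, C_j = cosh γ_j, and let z be a nonzero complex number. For n ∈ ℤ define x_n = C_n·zⁿ·∏_{j=M}^{N} f_j(n), where f_j(n) = (1+S_j z^{−1}) if j ≤ n−1, f_j(n) = (1−S_j z) if j ≥ n+1, and f_j(n) = 1 if j = n. For m, n ∈ ℤ define A_{mn} = C_m·(∏_{j=n+1}^{m−1} S_j)·C_n if m > n, A_{mn} = 0 if m = n, and A_{mn} = (−1)^{n−m−1}·C_n·(∏_{j=m+1}^{n−1} S_j)·C_m if m < n. Then for every m ∈ ℤ the family (A_{mn}·x_n)_{n∈ℤ} has finite support and Σ_{n∈ℤ} A_{mn}·x_n = (z + z^{−1})·x_m. -/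
open Finset

/-- The one-particle eigenvector `x_n = C_n zⁿ ∏_{j=M}^{N} f_j(n)`. -/
noncomputable def xvec (M N : ℤ) (γ : ℤ → ℂ) (z : ℂ) (n : ℤ) : ℂ :=
  Complex.cosh (γ n) * z ^ n *
    ∏ j ∈ Finset.Icc M N,
      (if j < n then 1 + Complex.sinh (γ j) * z⁻¹
       else if j = n then 1
       else 1 - Complex.sinh (γ j) * z)

/-- The one-particle Hamiltonian of the inhomogeneous critical Ising (XY) chain. -/
noncomputable def Amat (γ : ℤ → ℂ) (m n : ℤ) : ℂ :=
  if n < m then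
    Complex.cosh (γ m) * (∏ j ∈ Finset.Icc (n + 1) (m - 1), Complex.sinh (γ j)) *
      Complex.cosh (γ n)
  else if m = n then 0
  else (-1 : ℂ) ^ (n - m - 1) * Complex.cosh (γ n) *
    (∏ j ∈ Finset.Icc (m + 1) (n - 1), Complex.sinh (γ j)) * Complex.cosh (γ m)


theorem lower_sum (S g R : ℤ → ℂ) (lo : ℤ) (h0 : S lo = 0)
    (hR : ∀ m, R (m + 1) = S m * R m + g m) (m : ℤ) (hm : lo + 1 ≤ m) :
    ∑ n ∈ Finset.Ico lo m, (∏ j ∈ Finset.Icc (n + 1) (m - 1), S j) * g n = R m := by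
  induction m, hm using Int.leInduction with
  | base =>
    have : Finset.Ico lo (lo + 1) = {lo} := by ext x; simp; omega
    rw [this, hR lo, h0]
    simp
  | succ m hm ih =>
    have h1 : Finset.Ico lo (m + 1) = insert m (Finset.Ico lo m) := by ext x; simp; omega
    rw [h1, Finset.sum_insert (by simp), hR m, ← ih, Finset.mul_sum, add_comm]
    congr 1
    · apply Finset.sum_congr rfl
      intro n hn
      have hn := Finset.mem_Ico.1 hn
      have h2 : Finset.Icc (n + 1) (m + 1 - 1) = insert m (Finset.Icc (n + 1) (m - 1)) := by
        ext x; simp; omega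
      rw [h2, Finset.prod_insert (by simp)]
      ring
    · simp

theorem upper_sum (S g R : ℤ → ℂ) (hi : ℤ) (h0 : S hi = 0)
    (hR : ∀ m, R (m - 1) = S m * R m + g m) (m : ℤ) (hm : m ≤ hi - 1) :
    ∑ n ∈ Finset.Ioc m hi, (∏ j ∈ Finset.Icc (m + 1) (n - 1), S j) * g n = R m := by
  induction m, hm using Int.leInductionDown with
  | base =>
    have : Finset.Ioc (hi - 1) hi = {hi} := by ext x; simp; omega
    rw [this, hR hi, h0]
    simp
  | pred m hm ih =>
    have h1 : Finset.Ioc (m - 1) hi = insert m (Finset.Ioc m hi) := by ext x; simp; omega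
    rw [h1, Finset.sum_insert (by simp), hR m, ← ih, Finset.mul_sum, add_comm]
    congr 1
    · apply Finset.sum_congr rfl
      intro n hn
      have hn := Finset.mem_Ioc.1 hn
      have h2 : Finset.Icc (m - 1 + 1) (n - 1) = insert m (Finset.Icc (m + 1) (n - 1)) := by
        ext x; simp; omega
      rw [h2, Finset.prod_insert (by simp)]
      ring
    · simp

theorem P_step (s : Finset ℤ) (a : ℤ → ℂ) (n : ℤ) (h : n ∉ s → a n = 1) :
    ∏ j ∈ s, (if j < n + 1 then a j else 1) = (∏ j ∈ s, if j < n then a j else 1) * a n := by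
  have : a n = ∏ j ∈ s, if j = n then a j else 1 := by
    rw [Finset.prod_ite_eq']
    split_ifs with hn
    · rfl
    · exact h hn
  rw [this, ← Finset.prod_mul_distrib]
  apply Finset.prod_congr rfl
  intro j _
  rcases lt_trichotomy j n with h | h | h
  · simp [h, h.ne, h.trans (lt_add_one n)]
  · simp [h]
  · simp [h.ne', not_lt.2 h.le, not_lt.2 (Int.add_one_le_iff.2 h)]

theorem Q_step (s : Finset ℤ) (a : ℤ → ℂ) (n : ℤ) (h : n ∉ s → a n = 1) :
    ∏ j ∈ s, (if n - 1 < j then a j else 1) = (∏ j ∈ s, if n < j then a j else 1) * a n := by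
  have : a n = ∏ j ∈ s, if j = n then a j else 1 := by
    rw [Finset.prod_ite_eq']
    split_ifs with hn
    · rfl
    · exact h hn
  rw [this, ← Finset.prod_mul_distrib]
  apply Finset.prod_congr rfl
  intro j _
  rcases lt_trichotomy j n with h | h | h
  · simp [h.ne, not_lt.2 h.le, not_lt.2 (Int.le_sub_one_iff.2 h)]
  · simp [h]
  · simp [h, h.ne', (sub_one_lt n).trans h]

theorem xvec_eq (M N : ℤ) (γ : ℤ → ℂ) (z : ℂ) (n : ℤ) :
    xvec M N γ z n = Complex.cosh (γ n) * z ^ n *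
      ((∏ j ∈ Finset.Icc M N, if j < n then 1 + Complex.sinh (γ j) * z⁻¹ else 1) *
       (∏ j ∈ Finset.Icc M N, if n < j then 1 - Complex.sinh (γ j) * z else 1)) := by
  rw [xvec, ← Finset.prod_mul_distrib]
  congr 1
  apply Finset.prod_congr rfl
  intro j _
  rcases lt_trichotomy j n with h | h | h
  · simp [h, not_lt.2 h.le]
  · simp [h]
  · simp [h, h.ne', not_lt.2 h.le]

theorem sign_prod (S : ℤ → ℂ) (m n : ℤ) (h : m < n) :
    (-1 : ℂ) ^ (n - m - 1) * ∏ j ∈ Finset.Icc (m + 1) (n - 1), S j =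
      ∏ j ∈ Finset.Icc (m + 1) (n - 1), (- S j) := by
  rw [Finset.prod_neg, Int.card_Icc]
  congr 1
  rw [← zpow_natCast]
  congr 1
  omega

/-- The eigenvector relation `Σₙ A_{mn} xₙ = (z + z⁻¹) xₘ` diagonalizing the
inhomogeneous critical Ising (XY) chain. -/
theorem Amat_eigenvector (M N : ℤ) (hMN : M ≤ N) (γ : ℤ → ℂ)
    (hγ : ∀ j : ℤ, j ∉ Finset.Icc M N → γ j = 0) (z : ℂ) (hz : z ≠ 0) (m : ℤ) :
    (Function.support (fun n : ℤ => Amat γ m n * xvec M N γ z n)).Finite ∧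
    ∑ᶠ n : ℤ, Amat γ m n * xvec M N γ z n = (z + z⁻¹) * xvec M N γ z m := by
  set P : ℤ → ℂ := fun n =>
    ∏ j ∈ Finset.Icc M N, if j < n then 1 + Complex.sinh (γ j) * z⁻¹ else 1 with hP
  set Q : ℤ → ℂ := fun n =>
    ∏ j ∈ Finset.Icc M N, if n < j then 1 - Complex.sinh (γ j) * z else 1 with hQ
  have hx : ∀ n, xvec M N γ z n = Complex.cosh (γ n) * z ^ n * (P n * Q n) :=
    fun n => xvec_eq M N γ z n
  have hPs : ∀ n, P (n + 1) = P n * (1 + Complex.sinh (γ n) * z⁻¹) := fun n =>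
    P_step (Finset.Icc M N) (fun j => 1 + Complex.sinh (γ j) * z⁻¹) n
      (fun h => by simp [hγ n h])
  have hQs : ∀ n, Q (n - 1) = Q n * (1 - Complex.sinh (γ n) * z) := fun n =>
    Q_step (Finset.Icc M N) (fun j => 1 - Complex.sinh (γ j) * z) n
      (fun h => by simp [hγ n h])
  have hS : ∀ j, j < M ∨ N < j → Complex.sinh (γ j) = 0 := by
    intro j hj
    rw [hγ j (by simp; omega), Complex.sinh_zero]
  obtain ⟨lo, hlo⟩ : ∃ lo, lo = min m M - 1 := ⟨_, rfl⟩
  obtain ⟨hi, hhi⟩ : ∃ hi, hi = max m N + 1 := ⟨_, rfl⟩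
  have hsupp : Function.support (fun n : ℤ => Amat γ m n * xvec M N γ z n) ⊆
      ((Finset.Icc lo hi : Finset ℤ) : Set ℤ) := by
    intro n hn
    by_contra hc
    apply hn
    have hc : n < lo ∨ hi < n := by
      rw [Finset.mem_coe, Finset.mem_Icc] at hc
      omega
    have hA : Amat γ m n = 0 := by
      unfold Amat
      rcases hc with hc | hc
      · rw [if_pos (by omega), Finset.prod_eq_zero (i := n + 1) (by simp; omega)
          (hS _ (by omega))]
        ring
      · rw [if_neg (by omega), if_neg (by omega), Finset.prod_eq_zero (i := n - 1)
          (by simp; omega) (hS _ (by omega))]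
        ring
    simp [hA]
  refine ⟨(Finset.finite_toSet _).subset hsupp, ?_⟩
  rw [finsum_eq_sum_of_support_subset _ hsupp]
  have hsplit : Finset.Icc lo hi = insert m (Finset.Ico lo m ∪ Finset.Ioc m hi) := by
    ext x; simp; omega
  have hdisj : Disjoint (Finset.Ico lo m) (Finset.Ioc m hi) := by
    rw [Finset.disjoint_left]; intro x; simp; omega
  rw [hsplit, Finset.sum_insert (by simp), Finset.sum_union hdisj]
  set g : ℤ → ℂ := fun n => Complex.cosh (γ n) ^ 2 * z ^ n * (P n * Q n) with hg
  have hL := lower_sum (fun j => Complex.sinh (γ j)) g (fun m => P m * Q (m - 1) * z ^ (m - 1))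
    lo (hS _ (by omega)) (by
      intro k
      simp only [hg, add_sub_cancel_right, hPs, hQs, Complex.cosh_sq, zpow_sub_one₀ hz]
      field_simp
      ring) m (by omega)
  have hU := upper_sum (fun j => - Complex.sinh (γ j)) g (fun m => P (m + 1) * Q m * z ^ (m + 1))
    hi (by simp only [hS _ (show hi < M ∨ N < hi by omega), neg_zero]) (by
      intro k
      simp only [hg, sub_add_cancel, hPs, hQs, Complex.cosh_sq, zpow_add_one₀ hz]
      field_simp
      ring) m (by omega)
  have e1 : ∑ n ∈ Finset.Ico lo m, Amat γ m n * xvec M N γ z n =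
      Complex.cosh (γ m) * (P m * Q (m - 1) * z ^ (m - 1)) := by
    rw [← hL, Finset.mul_sum]
    apply Finset.sum_congr rfl
    intro n hn
    have hn := Finset.mem_Ico.1 hn
    rw [Amat, if_pos hn.2, hx]
    simp only [hg]
    ring
  have e2 : ∑ n ∈ Finset.Ioc m hi, Amat γ m n * xvec M N γ z n =
      Complex.cosh (γ m) * (P (m + 1) * Q m * z ^ (m + 1)) := by
    rw [← hU, Finset.mul_sum]
    apply Finset.sum_congr rfl
    intro n hn
    have hn := Finset.mem_Ioc.1 hn
    rw [Amat, if_neg (by omega), if_neg (by omega), hx,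
      ← sign_prod (fun j => Complex.sinh (γ j)) m n hn.1]
    simp only [hg]
    ring
  have e0 : Amat γ m m = 0 := by simp [Amat]
  rw [e0, e1, e2, hx, hPs, hQs, zpow_add_one₀ hz, zpow_sub_one₀ hz]
  field_simp
  ring
end

section
/- Let m < n be integers and S_m, S_{m+1}, …, S_n pairwise distinct real numbers in (−1,1). Set C_j = √(1+S_j²), B_j = (1+iS_j)/(1−iS_j), β_j = 2i·arctan S_j, and B_j^{1/2} = (1+iS_j)/C_j (so that (B_j^{1/2})² = B_j). Then (1/2π)·∫_{π/2}^{3π/2} ( C_m/(1+S_m e^{−iθ}) ) · ∏_{j=m+1}^{n−1} ( (1−S_j e^{iθ})/(1+S_j e^{−iθ}) ) · ( C_n/(1+S_n e^{−iθ}) ) · e^{−i(n−m)θ} dθ = (i^{m−n−1}/π)·B_m^{1/2}·B_n^{1/2}·Σ_{j=m}^{n} β_j · ∏_{l=m+1}^{n−1}(B_j+B_l) / ∏_{l=m, l≠j}^{n}(B_j−B_l). -/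
open Finset

/-- `B = (1+iS)/(1-iS)`, the vertical spectral parameter `e^β` with `β = 2i·arctan S`. -/
noncomputable def Bspec (S : ℝ) : ℂ := (1 + Complex.I * S) / (1 - Complex.I * S)

lemma aux_int (S : ℝ) (hS : S ∈ Set.Ioo (-1 : ℝ) 1) :
    ∫ θ in (Real.pi / 2)..(3 * Real.pi / 2),
      Complex.exp (Complex.I * θ) / (Complex.exp (Complex.I * θ) + S)
      = Real.pi + 2 * (Real.arctan S : ℂ) := by
  have habs : ‖(S : ℂ)‖ < 1 := by
    rw [Complex.norm_real, Real.norm_eq_abs, abs_lt]; exact hS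
  have hn : ∀ θ : ℝ, ‖(S : ℂ) * Complex.exp (-Complex.I * θ)‖ < 1 := by
    intro θ
    rw [norm_mul, show -Complex.I * (θ : ℂ) = ((-θ : ℝ) : ℂ) * Complex.I by push_cast; ring,
      Complex.norm_exp_ofReal_mul_I, mul_one]
    exact habs
  have hslit : ∀ θ : ℝ, 1 + (S : ℂ) * Complex.exp (-Complex.I * θ) ∈ Complex.slitPlane :=
    fun θ => Complex.mem_slitPlane_of_norm_lt_one (hn θ)
  have hne : ∀ θ : ℝ, Complex.exp (Complex.I * θ) + S ≠ 0 := by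
    intro θ h
    have h1 := Complex.slitPlane_ne_zero (hslit θ)
    apply h1
    have : Complex.exp (Complex.I * θ) * Complex.exp (-Complex.I * θ) = 1 := by
      rw [← Complex.exp_add]; simp
    linear_combination Complex.exp (-Complex.I * θ) * h - this
  have hd : ∀ θ : ℝ, HasDerivAt
      (fun θ : ℝ => (θ : ℂ) - Complex.I * Complex.log (1 + (S : ℂ) * Complex.exp (-Complex.I * θ)))
      (Complex.exp (Complex.I * θ) / (Complex.exp (Complex.I * θ) + S)) θ := by
    intro θ
    have h0 : HasDerivAt (fun θ : ℝ => (θ : ℂ)) 1 θ := Complex.ofRealCLM.hasDerivAt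
    have h1 := (((h0.const_mul (-Complex.I)).cexp.const_mul (S : ℂ)).const_add 1).clog_real
      (hslit θ)
    have h2 := h0.sub (h1.const_mul Complex.I)
    refine h2.congr_deriv ?_
    have h3 := Complex.slitPlane_ne_zero (hslit θ)
    have h4 := hne θ
    have h5 : Complex.exp (Complex.I * θ) * Complex.exp (-Complex.I * θ) = 1 := by
      rw [← Complex.exp_add]; simp
    have h6 := Complex.I_sq
    generalize Complex.exp (-Complex.I * θ) = w at *
    generalize Complex.exp (Complex.I * θ) = z at *
    rw [eq_div_iff h4]
    field_simp
    linear_combination (S * w * (z + S)) * h6 - S * h5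
  rw [intervalIntegral.integral_eq_sub_of_hasDerivAt (fun θ _ => hd θ)]
  · have e1 : Complex.exp (-Complex.I * ((3 * Real.pi / 2 : ℝ) : ℂ)) = Complex.I := by
      rw [show -Complex.I * ((3 * Real.pi / 2 : ℝ) : ℂ)
        = Real.pi / 2 * Complex.I - 2 * Real.pi * Complex.I by push_cast; ring,
        Complex.exp_sub, Complex.exp_pi_div_two_mul_I, Complex.exp_two_pi_mul_I, div_one]
    have e2 : Complex.exp (-Complex.I * ((Real.pi / 2 : ℝ) : ℂ)) = -Complex.I := by
      rw [show -Complex.I * ((Real.pi / 2 : ℝ) : ℂ)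
        = -(Real.pi / 2 * Complex.I) by push_cast; ring,
        Complex.exp_neg, Complex.exp_pi_div_two_mul_I, Complex.inv_I]
    rw [e1, e2, Complex.ofReal_arctan, Complex.arctan, ← Complex.hasSum_arctan_aux habs]
    rw [show 1 + (S : ℂ) * -Complex.I = 1 - S * Complex.I by ring]
    push_cast
    ring
  · apply Continuous.intervalIntegrable
    apply Continuous.div (by fun_prop) (by fun_prop) hne

lemma aux_prod_s13 (m n : ℤ) (hmn : m < n) (f : ℤ → ℂ) :
    ∏ j ∈ Finset.Icc m n, f j = f m * (∏ j ∈ Finset.Icc (m + 1) (n - 1), f j) * f n := by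
  have h1 : Finset.Icc m n = insert m (insert n (Finset.Icc (m + 1) (n - 1))) := by
    ext x; simp only [Finset.mem_Icc, Finset.mem_insert]; omega
  rw [h1, Finset.prod_insert, Finset.prod_insert]
  · ring
  · simp
  · simp only [Finset.mem_Icc, Finset.mem_insert]; omega

lemma aux_d (S : ℝ) : (1 - Complex.I * S : ℂ) ≠ 0 := by
  intro h
  have := congrArg Complex.re h
  simp at this

lemma aux_add (a b : ℝ) : Bspec a + Bspec b
    = 2 * (1 + a * b) / ((1 - Complex.I * a) * (1 - Complex.I * b)) := by
  unfold Bspec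
  have := aux_d a
  have := aux_d b
  field_simp
  linear_combination (-2 * a * b : ℂ) * Complex.I_sq

lemma aux_sub (a b : ℝ) : Bspec a - Bspec b
    = (-2 * Complex.I) * (-a - -b) / ((1 - Complex.I * a) * (1 - Complex.I * b)) := by
  unfold Bspec
  have := aux_d a
  have := aux_d b
  field_simp
  ring

/-- Residue at `-S j`. -/
noncomputable def resid (m n : ℤ) (S : ℤ → ℝ) (j : ℤ) : ℂ :=
  (∏ l ∈ Finset.Icc (m + 1) (n - 1), (1 + (S j : ℂ) * S l)) /
    ∏ l ∈ (Finset.Icc m n).erase j, (-(S j : ℂ) - -(S l : ℂ))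

lemma aux_rhs (m n : ℤ) (hmn : m < n) (S : ℤ → ℝ) (j : ℤ) (hj : j ∈ Finset.Icc m n) :
    (∏ l ∈ Finset.Icc (m + 1) (n - 1), (Bspec (S j) + Bspec (S l))) /
      (∏ l ∈ (Finset.Icc m n).erase j, (Bspec (S j) - Bspec (S l)))
    = resid m n S j * ((1 - Complex.I * S m) * (1 - Complex.I * S n) / 2 *
        Complex.I ^ (n - m)) := by
  obtain ⟨k, hk⟩ : ∃ k : ℕ, n - m = k + 1 := ⟨(n - m - 1).toNat, by omega⟩
  have c1 : (Finset.Icc (m + 1) (n - 1)).card = k := by rw [Int.card_Icc]; omega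
  have c2 : ((Finset.Icc m n).erase j).card = k + 1 := by
    rw [Finset.card_erase_of_mem hj, Int.card_Icc]; omega
  have hp := aux_prod_s13 m n hmn (fun l => 1 - Complex.I * S l)
  rw [← Finset.mul_prod_erase _ _ hj] at hp
  simp_rw [aux_add, aux_sub, Finset.prod_div_distrib, Finset.prod_mul_distrib,
    Finset.prod_const, c1, c2]
  have d1 : ∏ l ∈ Finset.Icc (m + 1) (n - 1), (1 - Complex.I * S l : ℂ) ≠ 0 :=
    Finset.prod_ne_zero_iff.2 fun l _ => aux_d _
  have d2 : ∏ l ∈ (Finset.Icc m n).erase j, (1 - Complex.I * S l : ℂ) ≠ 0 :=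
    Finset.prod_ne_zero_iff.2 fun l _ => aux_d _
  have d3 := aux_d (S j)
  unfold resid
  rw [hk, show ((k : ℤ) + 1) = ((k + 1 : ℕ) : ℤ) by push_cast; ring, zpow_natCast]
  have hI : Complex.I ^ (k + 1) * (-2 * Complex.I) ^ (k + 1) = 2 ^ (k + 1) := by
    rw [← mul_pow]
    congr 1
    linear_combination (-2 : ℂ) * Complex.I_sq
  have hI2 : (-2 * Complex.I) ^ (k + 1) ≠ 0 := by
    apply pow_ne_zero; simp
  rw [← mul_pow (-2 : ℂ) Complex.I]
  generalize Complex.I ^ (k + 1) = u at *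
  generalize (-2 * Complex.I) ^ (k + 1) = t at *
  generalize ∏ l ∈ Finset.Icc (m + 1) (n - 1), (1 - Complex.I * S l : ℂ) = x at *
  generalize ∏ l ∈ (Finset.Icc m n).erase j, (1 - Complex.I * S l : ℂ) = y at *
  generalize ∏ l ∈ Finset.Icc (m + 1) (n - 1), (1 + (S j : ℂ) * S l) = p at *
  generalize ∏ l ∈ (Finset.Icc m n).erase j, (-(S j : ℂ) - -(S l : ℂ)) = q at *
  generalize (1 - Complex.I * S j : ℂ) = d at *
  generalize (1 - Complex.I * S m : ℂ) = e at *
  generalize (1 - Complex.I * S n : ℂ) = f at *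
  have hp2 : e * f = d * y / x := by
    rw [eq_div_iff d1]; linear_combination -hp
  have hu : u = 2 ^ (k + 1) / t := by
    rw [eq_div_iff hI2, hI]
  rw [hp2, hu]
  by_cases hq : q = 0
  · simp [hq]
  field_simp
  try ring

open Polynomial in
lemma aux_pf (m n : ℤ) (hmn : m < n) (S : ℤ → ℝ) 
    (hdist : Set.InjOn S (Set.Icc m n)) :
    (∑ j ∈ Finset.Icc m n, resid m n S j = 0) ∧
    ∀ z : ℂ, (∀ j ∈ Finset.Icc m n, z + S j ≠ 0) →
      (∏ l ∈ Finset.Icc (m + 1) (n - 1), (1 - (S l : ℂ) * z)) /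
        (∏ l ∈ Finset.Icc m n, (z + S l)) = ∑ j ∈ Finset.Icc m n, resid m n S j / (z + S j) := by
  obtain ⟨k, hk⟩ : ∃ k : ℕ, n - m = k + 1 := ⟨(n - m - 1).toNat, by omega⟩
  have c1 : (Finset.Icc (m + 1) (n - 1)).card = k := by rw [Int.card_Icc]; omega
  have c2 : (Finset.Icc m n).card = k + 2 := by rw [Int.card_Icc]; omega
  set P : ℂ[X] := ∏ l ∈ Finset.Icc (m + 1) (n - 1), (C (-(S l : ℂ)) * X + C 1) with hP
  have hdeg : P.natDegree ≤ k := by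
    refine (natDegree_prod_le _ _).trans ?_
    refine (Finset.sum_le_card_nsmul _ _ 1 fun l _ => natDegree_linear_le).trans ?_
    simp [c1]
  have hev : ∀ z : ℂ, P.eval z = ∏ l ∈ Finset.Icc (m + 1) (n - 1), (1 - (S l : ℂ) * z) := by
    intro z
    rw [hP, eval_prod]
    refine Finset.prod_congr rfl fun l _ => ?_
    simp only [eval_add, eval_mul, eval_C, eval_X]
    ring
  have hdlt : P.degree < (Finset.Icc m n).card := by
    refine degree_le_natDegree.trans_lt ?_
    rw [c2]
    exact_mod_cast (by omega : P.natDegree < k + 2)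
  have hinj : Set.InjOn (fun j : ℤ => -(S j : ℂ)) (Finset.Icc m n) := by
    intro a ha b hb h
    simp only [neg_inj, Complex.ofReal_inj] at h
    exact hdist (by simpa using ha) (by simpa using hb) h
  have hres : ∀ j, resid m n S j = P.eval (-(S j : ℂ)) /
      ∏ l ∈ (Finset.Icc m n).erase j, (-(S j : ℂ) - -(S l : ℂ)) := by
    intro j
    rw [hev, resid]
    congr 1
    refine Finset.prod_congr rfl fun l _ => ?_
    ring
  constructor
  · simp_rw [hres]
    rw [← Lagrange.coeff_eq_sum hinj hdlt, c2]
    exact coeff_eq_zero_of_natDegree_lt (by omega)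
  · intro z hz
    rw [← hev]
    have h1 := Lagrange.eval_interpolate_not_at_node (s := Finset.Icc m n)
      (v := fun j : ℤ => -(S j : ℂ)) (x := z) (fun i => P.eval (-(S i : ℂ)))
      (fun i hi h => hz i hi (by rw [h]; ring))
    rw [← Lagrange.eq_interpolate hinj hdlt, Lagrange.eval_nodal] at h1
    simp only [sub_neg_eq_add] at h1
    rw [h1, mul_div_cancel_left₀ _ (Finset.prod_ne_zero_iff.2 hz)]
    refine Finset.sum_congr rfl fun j _ => ?_
    rw [hres, Lagrange.nodalWeight, Finset.prod_inv_distrib]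
    ring


lemma aux_integrand (m n : ℤ) (hmn : m < n) (S : ℤ → ℝ) 
    (hdist : Set.InjOn S (Set.Icc m n)) (cm cn : ℂ) (θ : ℝ)
    (hz : ∀ j ∈ Finset.Icc m n, Complex.exp (Complex.I * θ) + S j ≠ 0) :
    (cm / (1 + (S m : ℂ) * Complex.exp (-Complex.I * θ))) *
        (∏ j ∈ Finset.Icc (m + 1) (n - 1),
          ((1 - (S j : ℂ) * Complex.exp (Complex.I * θ)) /
            (1 + (S j : ℂ) * Complex.exp (-Complex.I * θ)))) *
        (cn / (1 + (S n : ℂ) * Complex.exp (-Complex.I * θ))) *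
        Complex.exp (-Complex.I * ((n : ℂ) - (m : ℂ)) * θ)
    = ∑ j ∈ Finset.Icc m n, cm * cn * resid m n S j *
        (Complex.exp (Complex.I * θ) / (Complex.exp (Complex.I * θ) + S j)) := by
  obtain ⟨k, hk⟩ : ∃ k : ℕ, n - m = k + 1 := ⟨(n - m - 1).toNat, by omega⟩
  have c1 : (Finset.Icc (m + 1) (n - 1)).card = k := by rw [Int.card_Icc]; omega
  have e1 : Complex.exp (-Complex.I * θ) = (Complex.exp (Complex.I * θ))⁻¹ := by
    rw [← Complex.exp_neg]; ring_nf
  have e2 : Complex.exp (-Complex.I * ((n : ℂ) - (m : ℂ)) * θ)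
      = (Complex.exp (Complex.I * θ) ^ (k + 1))⁻¹ := by
    rw [← Complex.exp_nat_mul, ← Complex.exp_neg]
    have : (n : ℂ) - m = k + 1 := by exact_mod_cast hk
    rw [this]; push_cast; ring_nf
  have hpf := (aux_pf m n hmn S hdist).2 _ hz
  have hz0 : Complex.exp (Complex.I * θ) ≠ 0 := Complex.exp_ne_zero _
  rw [e2, e1]
  generalize Complex.exp (Complex.I * θ) = z at *
  have hf : ∀ s : ℂ, 1 + s * z⁻¹ = (z + s) / z := by intro s; field_simp
  have hR : ∑ j ∈ Finset.Icc m n, cm * cn * resid m n S j * (z / (z + S j))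
      = cm * cn * z * ∑ j ∈ Finset.Icc m n, resid m n S j / (z + S j) := by
    rw [Finset.mul_sum]; refine Finset.sum_congr rfl fun j _ => ?_; ring
  have hmid : ∏ j ∈ Finset.Icc (m + 1) (n - 1), (z + (S j : ℂ)) ≠ 0 :=
    Finset.prod_ne_zero_iff.2 fun l hl => hz l (by simp only [Finset.mem_Icc] at hl ⊢; omega)
  have h1 := hz m (by simp only [Finset.mem_Icc]; omega)
  have h2 := hz n (by simp only [Finset.mem_Icc]; omega)
  rw [hR, ← hpf, aux_prod_s13 m n hmn]
  simp_rw [hf, Finset.prod_div_distrib, Finset.prod_const, c1]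
  field_simp
  ring

/-- The two-point function `⟨vac|ψ*ₘψₙ|vac⟩` of the free fermions diagonalizing the
inhomogeneous critical Ising (XY) transfer matrix, evaluated by residue calculus. -/
theorem fermion_two_point (m n : ℤ) (hmn : m < n) (S : ℤ → ℝ)
    (hS : ∀ j ∈ Finset.Icc m n, S j ∈ Set.Ioo (-1 : ℝ) 1)
    (hdist : Set.InjOn S (Set.Icc m n)) :
    (1 / (2 * (Real.pi : ℂ))) *
      ∫ θ in (Real.pi / 2)..(3 * Real.pi / 2),
        ((Real.sqrt (1 + S m ^ 2) : ℂ) / (1 + (S m : ℂ) * Complex.exp (-Complex.I * θ))) *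
        (∏ j ∈ Finset.Icc (m + 1) (n - 1),
          ((1 - (S j : ℂ) * Complex.exp (Complex.I * θ)) /
            (1 + (S j : ℂ) * Complex.exp (-Complex.I * θ)))) *
        ((Real.sqrt (1 + S n ^ 2) : ℂ) / (1 + (S n : ℂ) * Complex.exp (-Complex.I * θ))) *
        Complex.exp (-Complex.I * ((n : ℂ) - (m : ℂ)) * θ)
      = Complex.I ^ (m - n - 1) / (Real.pi : ℂ) *
          ((1 + Complex.I * S m) / (Real.sqrt (1 + S m ^ 2) : ℂ)) *
          ((1 + Complex.I * S n) / (Real.sqrt (1 + S n ^ 2) : ℂ)) *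
          ∑ j ∈ Finset.Icc m n,
            (2 * Complex.I * (Real.arctan (S j) : ℂ)) *
              (∏ l ∈ Finset.Icc (m + 1) (n - 1), (Bspec (S j) + Bspec (S l))) /
              (∏ l ∈ (Finset.Icc m n).erase j, (Bspec (S j) - Bspec (S l))) := by
  have hmem : ∀ j ∈ Finset.Icc m n, ∀ θ : ℝ, Complex.exp (Complex.I * θ) + S j ≠ 0 := by
    intro j hj θ h
    have h1 : ‖Complex.exp (Complex.I * θ)‖ = 1 := by
      rw [mul_comm, Complex.norm_exp_ofReal_mul_I]
    rw [eq_neg_of_add_eq_zero_left h, norm_neg, Complex.norm_real, Real.norm_eq_abs] at h1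
    have := abs_lt.2 (hS j hj)
    linarith
  have hsum := (aux_pf m n hmn S hdist).1
  simp_rw [fun θ : ℝ => aux_integrand m n hmn S hdist (Real.sqrt (1 + S m ^ 2) : ℂ)
    (Real.sqrt (1 + S n ^ 2) : ℂ) θ (fun j hj => hmem j hj θ)]
  rw [intervalIntegral.integral_finsetSum]
  swap
  · intro j hj
    apply Continuous.intervalIntegrable
    exact continuous_const.mul (Continuous.div (by fun_prop) (by fun_prop) (hmem j hj))
  simp_rw [intervalIntegral.integral_const_mul]
  rw [Finset.sum_congr rfl fun j hj => by rw [aux_int (S j) (hS j hj)]]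
  have hL : ∑ j ∈ Finset.Icc m n, (Real.sqrt (1 + S m ^ 2) : ℂ) * (Real.sqrt (1 + S n ^ 2) : ℂ) *
      resid m n S j * (Real.pi + 2 * (Real.arctan (S j) : ℂ))
      = 2 * (Real.sqrt (1 + S m ^ 2) : ℂ) * (Real.sqrt (1 + S n ^ 2) : ℂ) *
        ∑ j ∈ Finset.Icc m n, resid m n S j * (Real.arctan (S j) : ℂ) := by
    have : ∀ j, (Real.sqrt (1 + S m ^ 2) : ℂ) * (Real.sqrt (1 + S n ^ 2) : ℂ) *
      resid m n S j * (Real.pi + 2 * (Real.arctan (S j) : ℂ))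
      = (Real.sqrt (1 + S m ^ 2) : ℂ) * (Real.sqrt (1 + S n ^ 2) : ℂ) * Real.pi * resid m n S j
        + 2 * (Real.sqrt (1 + S m ^ 2) : ℂ) * (Real.sqrt (1 + S n ^ 2) : ℂ) *
          (resid m n S j * (Real.arctan (S j) : ℂ)) := by intro j; ring
    simp_rw [this]
    rw [Finset.sum_add_distrib, ← Finset.mul_sum, ← Finset.mul_sum, hsum]
    ring
  have hRR : ∑ j ∈ Finset.Icc m n,
            (2 * Complex.I * (Real.arctan (S j) : ℂ)) *
              (∏ l ∈ Finset.Icc (m + 1) (n - 1), (Bspec (S j) + Bspec (S l))) /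
              (∏ l ∈ (Finset.Icc m n).erase j, (Bspec (S j) - Bspec (S l)))
      = Complex.I * ((1 - Complex.I * S m) * (1 - Complex.I * S n) * Complex.I ^ (n - m)) *
        ∑ j ∈ Finset.Icc m n, resid m n S j * (Real.arctan (S j) : ℂ) := by
    rw [Finset.mul_sum]
    refine Finset.sum_congr rfl fun j hj => ?_
    rw [mul_div_assoc, aux_rhs m n hmn S j hj]
    ring
  rw [hL, hRR]
  have hsq : ∀ x : ℝ, (1 + Complex.I * x) / (Real.sqrt (1 + x ^ 2) : ℂ) * (1 - Complex.I * x)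
      = (Real.sqrt (1 + x ^ 2) : ℂ) := by
    intro x
    have hpos : (0 : ℝ) < 1 + x ^ 2 := by positivity
    have h0 : (Real.sqrt (1 + x ^ 2) : ℂ) ≠ 0 := by
      exact_mod_cast (Real.sqrt_pos.2 hpos).ne'
    have h1 : (Real.sqrt (1 + x ^ 2) : ℂ) * (Real.sqrt (1 + x ^ 2) : ℂ) = 1 + (x : ℂ) ^ 2 := by
      exact_mod_cast Real.mul_self_sqrt hpos.le
    rw [div_mul_eq_mul_div, div_eq_iff h0, h1]
    linear_combination (-(x : ℂ) ^ 2) * Complex.I_sq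
  have hI : Complex.I ^ (m - n - 1) * Complex.I * Complex.I ^ (n - m) = 1 := by
    rw [← zpow_add_one₀ Complex.I_ne_zero, ← zpow_add₀ Complex.I_ne_zero,
      show m - n - 1 + 1 + (n - m) = 0 by ring, zpow_zero]
  have hpi : (Real.pi : ℂ) ≠ 0 := by exact_mod_cast Real.pi_ne_zero
  generalize ∑ j ∈ Finset.Icc m n, resid m n S j * (Real.arctan (S j) : ℂ) = T
  have ha := hsq (S m)
  have hb := hsq (S n)
  generalize (1 + Complex.I * S m) / (Real.sqrt (1 + S m ^ 2) : ℂ) = a at *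
  generalize (1 + Complex.I * S n) / (Real.sqrt (1 + S n ^ 2) : ℂ) = b at *
  rw [← ha, ← hb]
  generalize (1 - Complex.I * S m : ℂ) = a' at *
  generalize (1 - Complex.I * S n : ℂ) = b' at *
  generalize Complex.I ^ (m - n - 1) = u at *
  generalize Complex.I ^ (n - m) = v at *
  field_simp
  linear_combination (-a * a' * b * b' * T) * hI
end

section
/- Let λ be a real number with 0 < |λ| < 2. Then ∫_{−∞}^{∞} e^{λα}/cosh²α dα = πλ/sin(πλ/2). -/
open MeasureTheory Set in
lemma beta_real_aux (s : ℝ) (hs1 : -1 < s) (hs2 : s < 1) (hs0 : s ≠ 0) :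
    ∫ x in Ioo (0:ℝ) 1, x ^ s * (1 - x) ^ (-s) = Real.pi * s / Real.sin (Real.pi * s) := by
  have h1 : Complex.betaIntegral ((1 + s : ℝ) : ℂ) ((1 - s : ℝ) : ℂ)
      = ((∫ x in Ioo (0:ℝ) 1, x ^ s * (1 - x) ^ (-s) : ℝ) : ℂ) := by
    rw [Complex.betaIntegral, intervalIntegral.integral_of_le zero_le_one,
      integral_Ioc_eq_integral_Ioo, ← integral_complex_ofReal]
    refine setIntegral_congr_fun measurableSet_Ioo fun x hx => ?_
    have e1 : ((1 + s : ℝ) : ℂ) - 1 = ((s : ℝ) : ℂ) := by push_cast; ring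
    have e2 : ((1 - s : ℝ) : ℂ) - 1 = ((-s : ℝ) : ℂ) := by push_cast; ring
    have e3 : (1 : ℂ) - (x : ℂ) = ((1 - x : ℝ) : ℂ) := by push_cast; ring
    simp only [e1, e2, e3]
    rw [← Complex.ofReal_cpow hx.1.le, ← Complex.ofReal_cpow (by linarith [hx.2])]
    push_cast
    rfl
  have h2 := ProbabilityTheory.beta_eq_betaIntegralReal (1 + s) (1 - s) (by linarith) (by linarith)
  rw [h1, Complex.ofReal_re] at h2
  rw [← h2, ProbabilityTheory.beta, show 1 + s + (1 - s) = 2 by ring, Real.Gamma_two,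
    add_comm, Real.Gamma_add_one hs0, mul_assoc, Real.Gamma_mul_Gamma_one_sub]
  ring

/-- `∫_{-∞}^{∞} e^{λα}/cosh²α dα = πλ/sin(πλ/2)` for `0 < |λ| < 2`. -/
theorem exp_div_cosh_sq_integral (l : ℝ) (h0 : 0 < |l|) (h2 : |l| < 2) :
    ∫ α : ℝ, Real.exp (l * α) / Real.cosh α ^ 2
      = Real.pi * l / Real.sin (Real.pi * l / 2) := by
  obtain ⟨ha, hb⟩ := abs_lt.mp h2
  have hl : l ≠ 0 := abs_pos.mp h0
  have hB := beta_real_aux (l / 2) (by linarith) (by linarith) (by positivity)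
  have himg : (fun α : ℝ => Real.sigmoid (2 * α)) '' Set.univ = Set.Ioo 0 1 := by
    rw [Set.image_univ, ← Real.range_sigmoid]
    exact (mul_left_surjective₀ (two_ne_zero (α := ℝ))).range_comp Real.sigmoid
  have hd : ∀ x ∈ (Set.univ : Set ℝ), HasDerivWithinAt (fun α : ℝ => Real.sigmoid (2 * α))
      (Real.sigmoid (2 * x) * (1 - Real.sigmoid (2 * x)) * 2) Set.univ x := by
    intro x _
    have h := (Real.hasDerivAt_sigmoid (2 * x)).comp x ((hasDerivAt_id x).const_mul 2)
    rw [mul_one] at h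
    exact h.hasDerivWithinAt
  have hinj : Set.InjOn (fun α : ℝ => Real.sigmoid (2 * α)) Set.univ := by
    intro x _ y _ h
    have := Real.sigmoid_injective h
    linarith
  have key := MeasureTheory.integral_image_eq_integral_abs_deriv_smul MeasurableSet.univ hd hinj
    (fun x => x ^ (l / 2) * (1 - x) ^ (-(l / 2)))
  rw [himg, hB, MeasureTheory.setIntegral_univ] at key
  have hpt : ∀ α : ℝ, Real.exp (l * α) / Real.cosh α ^ 2 =
      2 * (|Real.sigmoid (2 * α) * (1 - Real.sigmoid (2 * α)) * 2| •
        (Real.sigmoid (2 * α) ^ (l / 2) * (1 - Real.sigmoid (2 * α)) ^ (-(l / 2)))) := by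
    intro α
    have p1 := Real.sigmoid_pos (2 * α)
    have p2 : 0 < 1 - Real.sigmoid (2 * α) := by linarith [Real.sigmoid_lt_one (2 * α)]
    have q : Real.sigmoid (2 * α) ^ (l / 2) * (1 - Real.sigmoid (2 * α)) ^ (-(l / 2))
        = Real.exp (l * α) := by
      have r : Real.sigmoid (2 * α) = (1 - Real.sigmoid (2 * α)) * Real.exp (2 * α) := by
        rw [← Real.sigmoid_neg, ← Real.sigmoid_mul_rexp_neg, mul_assoc, ← Real.exp_add]
        simp
      rw [Real.rpow_neg p2.le, ← div_eq_mul_inv, ← Real.div_rpow p1.le p2.le,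
        (div_eq_iff p2.ne').mpr (r.trans (mul_comm _ _)), ← Real.exp_mul]
      congr 1; ring
    rw [q, abs_of_pos (by positivity), smul_eq_mul, ← Real.sigmoid_neg, Real.sigmoid_def,
      Real.sigmoid_def, Real.cosh_eq, neg_neg, show -(2 * α) = -α + -α by ring,
      show 2 * α = α + α by ring, Real.exp_add, Real.exp_add, Real.exp_neg]
    have := Real.exp_pos α
    field_simp
    ring
  simp_rw [hpt]
  rw [MeasureTheory.integral_const_mul, ← key, show Real.pi * (l / 2) = Real.pi * l / 2 by ring]
  ring
end

section
/- For ν ∈ (0,1), the function I(ν) = ∫₀^∞ sinh((1−ν)t)/(sinh t·cosh(νt)) dt is well defined (the improper integral converges absolutely) and differentiable on (0,1), with I′(ν) = −∫₀^∞ t·cosh t/(sinh t·cosh²(νt)) dt. -/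
open MeasureTheory

lemma aux_cosh_ge (x : ℝ) : Real.exp x / 2 ≤ Real.cosh x := by
  rw [Real.cosh_eq]
  have := Real.exp_pos (-x)
  linarith

lemma aux_bound (a x t : ℝ) (ha : 0 < a) (ha1 : a < 1) (hx : a ≤ x) (ht : 0 < t) :
    t * Real.cosh t / (Real.sinh t * Real.cosh (x * t) ^ 2) ≤ 4 / a * Real.exp (-a * t) := by
  have hs : 0 < Real.sinh t := Real.sinh_pos_iff.2 ht
  have hc : 0 < Real.cosh (x * t) := Real.cosh_pos _
  have h1 : t * Real.cosh t ≤ Real.sinh t * (1 + t) := by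
    have h2 : t ≤ Real.sinh t := Real.self_le_sinh_iff.2 ht.le
    have h3 : Real.cosh t - Real.sinh t ≤ 1 := by
      rw [Real.cosh_sub_sinh]
      exact Real.exp_le_one_iff.2 (by linarith)
    nlinarith
  have h4 : Real.exp (a * t) / 2 ≤ Real.cosh (x * t) := by
    refine le_trans ?_ (aux_cosh_ge _)
    have : Real.exp (a * t) ≤ Real.exp (x * t) := Real.exp_le_exp.2 (by nlinarith)
    linarith
  have he : 0 < Real.exp (a * t) := Real.exp_pos _
  have h5 : a * (1 + t) ≤ Real.exp (a * t) := by
    have := Real.add_one_le_exp (a * t)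
    linarith
  have h6 : Real.exp (a * t) ^ 2 / 4 ≤ Real.cosh (x * t) ^ 2 := by nlinarith
  have h7 : Real.exp (-a * t) = (Real.exp (a * t))⁻¹ := by
    rw [← Real.exp_neg]; ring_nf
  rw [h7, div_le_iff₀ (by positivity)]
  refine h1.trans ?_
  have h8 : 1 + t ≤ 4 / a * (Real.exp (a * t))⁻¹ * (Real.exp (a * t) ^ 2 / 4) := by
    have : 4 / a * (Real.exp (a * t))⁻¹ * (Real.exp (a * t) ^ 2 / 4) = Real.exp (a * t) / a := by
      field_simp
    rw [this, le_div_iff₀ ha]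
    linarith
  calc Real.sinh t * (1 + t)
      ≤ Real.sinh t * (4 / a * (Real.exp (a * t))⁻¹ * Real.cosh (x * t) ^ 2) := by
        refine mul_le_mul_of_nonneg_left (h8.trans ?_) hs.le
        exact mul_le_mul_of_nonneg_left h6 (by positivity)
    _ = _ := by ring

lemma aux_bound0 (ν t : ℝ) (h0 : 0 < ν) (h1 : ν < 1) (ht : 0 < t) :
    ‖Real.sinh ((1 - ν) * t) / (Real.sinh t * Real.cosh (ν * t))‖ ≤ 2 * Real.exp (-ν * t) := by
  have hs : 0 < Real.sinh t := Real.sinh_pos_iff.2 ht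
  have hc : 0 < Real.cosh (ν * t) := Real.cosh_pos _
  have hn : 0 < Real.sinh ((1 - ν) * t) := Real.sinh_pos_iff.2 (by nlinarith)
  rw [Real.norm_of_nonneg (by positivity), div_le_iff₀ (by positivity)]
  have h2 : Real.sinh ((1 - ν) * t) ≤ Real.sinh t := Real.sinh_le_sinh.2 (by nlinarith)
  have h3 := aux_cosh_ge (ν * t)
  have h7 : Real.exp (-ν * t) * Real.exp (ν * t) = 1 := by
    rw [← Real.exp_add]; simp
  have hp := Real.exp_pos (-ν * t)
  have h8 : 1 ≤ 2 * Real.exp (-ν * t) * Real.cosh (ν * t) := by nlinarith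
  nlinarith

/-- The function `I(ν) = ∫₀^∞ sinh((1-ν)t)/(sinh t cosh νt) dt` is well defined and
differentiable on `(0,1)`, with `I'(ν) = -∫₀^∞ t cosh t/(sinh t cosh²νt) dt`. -/
theorem ground_state_integral_deriv :
    ∀ ν ∈ Set.Ioo (0 : ℝ) 1,
      IntegrableOn
        (fun t : ℝ => Real.sinh ((1 - ν) * t) / (Real.sinh t * Real.cosh (ν * t)))
        (Set.Ioi 0) ∧
      HasDerivAt
        (fun ν' : ℝ =>
          ∫ t in Set.Ioi (0 : ℝ), Real.sinh ((1 - ν') * t) / (Real.sinh t * Real.cosh (ν' * t)))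
        (-∫ t in Set.Ioi (0 : ℝ), t * Real.cosh t / (Real.sinh t * Real.cosh (ν * t) ^ 2))
        ν := by
  rintro ν ⟨h0, h1⟩
  have hm : ∀ x : ℝ, Measurable
      (fun t : ℝ => Real.sinh ((1 - x) * t) / (Real.sinh t * Real.cosh (x * t))) := by
    intro x
    fun_prop
  have hint : IntegrableOn
        (fun t : ℝ => Real.sinh ((1 - ν) * t) / (Real.sinh t * Real.cosh (ν * t)))
        (Set.Ioi 0) := by
    refine Integrable.mono' ((exp_neg_integrableOn_Ioi 0 h0).const_mul 2)
      (hm ν).aestronglyMeasurable ?_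
    filter_upwards [ae_restrict_mem measurableSet_Ioi] with t ht
    exact aux_bound0 ν t h0 h1 ht
  refine ⟨hint, ?_⟩
  rw [← integral_neg]
  have ha : 0 < ν / 2 := by linarith
  refine (hasDerivAt_integral_of_dominated_loc_of_deriv_le
    (F := fun x t : ℝ => Real.sinh ((1 - x) * t) / (Real.sinh t * Real.cosh (x * t)))
    (F' := fun x t : ℝ => -(t * Real.cosh t / (Real.sinh t * Real.cosh (x * t) ^ 2)))
    (bound := fun t => 4 / (ν / 2) * Real.exp (-(ν / 2) * t))
    (s := Set.Ioi (ν / 2)) (Ioi_mem_nhds (by linarith))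
    (Filter.Eventually.of_forall fun x => (hm x).aestronglyMeasurable) hint ?_ ?_
    ((exp_neg_integrableOn_Ioi 0 ha).const_mul _) ?_).2
  · apply Measurable.aestronglyMeasurable
    fun_prop
  · filter_upwards [ae_restrict_mem measurableSet_Ioi] with t ht x hx
    have ht : 0 < t := ht
    have hs : 0 < Real.sinh t := Real.sinh_pos_iff.2 ht
    have hc : 0 < Real.cosh t := Real.cosh_pos _
    rw [norm_neg, Real.norm_of_nonneg (by positivity)]
    exact aux_bound _ x t ha (by linarith) (le_of_lt hx) ht
  · filter_upwards [ae_restrict_mem measurableSet_Ioi] with t ht x hx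
    have ht : 0 < t := ht
    have hs : 0 < Real.sinh t := Real.sinh_pos_iff.2 ht
    have hc : 0 < Real.cosh (x * t) := Real.cosh_pos _
    have e1 : HasDerivAt (fun x : ℝ => (1 - x) * t) (-1 * t) x :=
      ((hasDerivAt_id x).const_sub 1).mul_const t
    have e2 : HasDerivAt (fun x : ℝ => x * t) (1 * t) x := (hasDerivAt_id x).mul_const t
    have e3 := e1.sinh.div (e2.cosh.const_mul (Real.sinh t)) (by positivity)
    refine e3.congr_deriv ?_
    have key : Real.cosh t = Real.cosh ((1 - x) * t) * Real.cosh (x * t)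
        + Real.sinh ((1 - x) * t) * Real.sinh (x * t) := by
      rw [← Real.cosh_add]; ring_nf
    rw [key]
    field_simp
    ring
end

section
/- Let r ≥ 1, let ω₁, …, ω_r be positive real numbers, let x > 0 be real, and let s ∈ ℂ with Re s > r. Then the family ( (x + n₁ω₁ + ⋯ + n_rω_r)^{−s} )_{(n₁,…,n_r) ∈ ℕ^r} is summable, defining the multiple Hurwitz zeta function ζ_r(s, x | ω₁,…,ω_r), and for each index i (1 ≤ i ≤ r) the difference equation ζ_r(s, x | ω) − ζ_r(s, x+ω_i | ω) = ζ_{r−1}(s, x | ω(i)) holds, where ω(i) = (ω₁,…,ω_{i−1},ω_{i+1},…,ω_r) and ζ₀(s,x) = x^{−s}. -/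
/-- The multiple Hurwitz zeta function
`ζ_r(s, x | ω) = Σ_{n ∈ ℕ^r} (x + n·ω)^{-s}` (principal complex power). -/
noncomputable def mzeta (r : ℕ) (s : ℂ) (x : ℝ) (ω : Fin r → ℝ) : ℂ :=
  ∑' n : Fin r → ℕ, ((x + ∑ i, (n i : ℝ) * ω i : ℝ) : ℂ) ^ (-s)

lemma summable_pi_prod (f : ℕ → ℝ) (h0 : ∀ n, 0 ≤ f n) (hf : Summable f) (k : ℕ) :
    Summable (fun n : Fin k → ℕ => ∏ i, f (n i)) := by
  induction k with
  | zero => exact (hasSum_fintype _).summable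
  | succ k ih =>
    rw [← (Fin.consEquiv (fun _ : Fin (k + 1) => ℕ)).summable_iff]
    have h := hf.mul_of_nonneg ih h0 (fun n => Finset.prod_nonneg fun i _ => h0 _)
    refine h.congr fun p => ?_
    simp [Fin.consEquiv, Fin.prod_univ_succ]

lemma mzeta_summable_aux (r : ℕ) (ω : Fin (r + 1) → ℝ)
    (hω : ∀ i, 0 < ω i) (x : ℝ) (hx : 0 < x) (s : ℂ) (hs : ((r : ℝ) + 1) < s.re) :
    Summable (fun n : Fin (r + 1) → ℕ => ((x + ∑ i, (n i : ℝ) * ω i : ℝ) : ℂ) ^ (-s)) := by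
  obtain ⟨c, hc, hcx, hcω⟩ : ∃ c : ℝ, 0 < c ∧ c ≤ x ∧ ∀ i, c ≤ ω i := by
    obtain ⟨j, hj⟩ := Finite.exists_min ω
    exact ⟨min x (ω j), lt_min hx (hω j), min_le_left _ _,
      fun i => (min_le_right _ _).trans (hj i)⟩
  have hr : (0 : ℝ) < (r : ℝ) + 1 := by positivity
  set t : ℝ := s.re / ((r : ℝ) + 1) with ht
  have ht1 : 1 < t := by rw [ht, lt_div_iff₀ hr]; linarith
  have hsum : Summable (fun n : ℕ => (c * ((n : ℝ) + 1)) ^ (-t)) := by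
    have h1 : Summable (fun n : ℕ => ((n : ℝ)) ^ (-t)) :=
      Real.summable_nat_rpow.2 (by linarith)
    have h2 := ((summable_nat_add_iff 1).2 h1).mul_left (c ^ (-t))
    refine h2.congr fun n => ?_
    rw [Real.mul_rpow hc.le (by positivity)]
    push_cast
    rfl
  have hprod := summable_pi_prod _ (fun n => by positivity) hsum (r + 1)
  refine Summable.of_norm_bounded hprod fun n => ?_
  have hnn : ∀ i, 0 ≤ (n i : ℝ) * ω i := fun i => mul_nonneg (by positivity) (hω i).le
  have hpos : 0 < x + ∑ i, (n i : ℝ) * ω i :=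
    add_pos_of_pos_of_nonneg hx (Finset.sum_nonneg fun i _ => hnn i)
  rw [Complex.norm_cpow_eq_rpow_re_of_pos hpos]
  have hpow : (x + ∑ i, (n i : ℝ) * ω i) ^ (-s).re
      = ∏ _i : Fin (r + 1), (x + ∑ i, (n i : ℝ) * ω i) ^ (-t) := by
    rw [Finset.prod_const, Finset.card_univ, Fintype.card_fin, ← Real.rpow_natCast,
      ← Real.rpow_mul hpos.le]
    congr 1
    rw [ht, Complex.neg_re]
    push_cast
    field_simp
  rw [hpow]
  refine Finset.prod_le_prod (fun i _ => by positivity) fun i _ => ?_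
  refine Real.rpow_le_rpow_of_nonpos (by positivity) ?_ (by linarith)
  have h1 := Finset.single_le_sum (f := fun i => (n i : ℝ) * ω i) (fun i _ => hnn i)
    (Finset.mem_univ i)
  have h2 : (n i : ℝ) * c ≤ n i * ω i := mul_le_mul_of_nonneg_left (hcω i) (by positivity)
  linarith

lemma mzeta_eq_tsum (r : ℕ) (ω : Fin (r + 1) → ℝ)
    (hω : ∀ i, 0 < ω i) (x : ℝ) (hx : 0 < x) (s : ℂ) (hs : ((r : ℝ) + 1) < s.re)
    (i : Fin (r + 1)) :
    HasSum (fun m : ℕ => mzeta r s (x + m * ω i) (ω ∘ i.succAbove)) (mzeta (r + 1) s x ω) := by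
  have h := mzeta_summable_aux r ω hω x hx s hs
  have h2 := h.hasSum
  rw [← (Fin.insertNthEquiv (fun _ : Fin (r + 1) => ℕ) i).hasSum_iff] at h2
  have h3 := h2.summable
  have h4 := h2.prod_fiberwise fun m => (h3.prod_factor m).hasSum
  convert h4 using 1
  swap
  · rfl
  funext m
  unfold mzeta
  refine tsum_congr fun n => ?_
  simp [Fin.insertNthEquiv, Fin.sum_univ_succAbove _ i, add_assoc]

theorem mzeta_summable_and_difference (r : ℕ) (ω : Fin (r + 1) → ℝ)
    (hω : ∀ i, 0 < ω i) (x : ℝ) (hx : 0 < x) (s : ℂ) (hs : ((r : ℝ) + 1) < s.re) :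
    Summable (fun n : Fin (r + 1) → ℕ => ((x + ∑ i, (n i : ℝ) * ω i : ℝ) : ℂ) ^ (-s)) ∧
    ∀ i : Fin (r + 1),
      mzeta (r + 1) s x ω - mzeta (r + 1) s (x + ω i) ω
        = mzeta r s x (ω ∘ i.succAbove) := by
  refine ⟨mzeta_summable_aux r ω hω x hx s hs, fun i => ?_⟩
  have h1 := mzeta_eq_tsum r ω hω x hx s hs i
  have h2 := mzeta_eq_tsum r ω hω (x + ω i) (add_pos hx (hω i)) s hs i
  have h3 := h1.summable.tsum_eq_zero_add
  rw [h1.tsum_eq] at h3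
  rw [h3, ← h2.tsum_eq]
  have h4 : ∀ m : ℕ, x + ((m + 1 : ℕ) : ℝ) * ω i = x + ω i + m * ω i := fun m => by
    push_cast; ring
  simp only [h4]
  simp
end
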